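/- arXiv:2204.13534 — 2 statements merged into one kernel-verified Lean document; each statement's English description precedes it below -/
import Mathlib

section
/- In the block Markov chain model, let X be a sample path starting in equilibrium and set M_X := N̂_X − E[N̂_X]. Let 0 ≤ r′ ≤ r ≤ R be integers and m ∈ ℤ≥0^R with m_i = 1 for i = 1,…,r. Then there exist a constant C > 0 and n₀ such that for all n ≥ n₀, the maximum of |E[M_{X,e₁}^{m₁}⋯M_{X,e_R}^{m_R}]| over all (e₁,…,e_R) ∈ E^R_{n,r′} is at most C·n^{−⌈r/2⌉−⌈r′/2⌉}. -/
/-!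
Write `M_U(t) = ∏_{i ∈ U} (N_{e i}(t) - t μ_i)` for the product of the centred edge counts after `t`
steps, where `μ_i` is the equilibrium probability of traversing `e i` in one step; a power
`M_e ^ m` is a product over `m` labels carrying the same edge. The vector
`f_t(U)(y) = E[M_U(t) ; X_t = y]` satisfies a linear recursion in `t`: expanding the product
according to the set `T ⊆ U` of labels whose increment is taken in the last step gives
`f_{t+1}(U)(y) = ∑_T ∑_x f_t(U \ T)(x) P(x,y) ∏_{i ∈ T} (1{(x,y) = e i} - μ_i)`
(`fwd`, `fv_succ`, `integral_eq_sum_fwd`).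

Split `f_t(U) = fS · Π + fW` into its total mass `fS = E[M_U(t)]` times the equilibrium `Π`, and a
fluctuation `fW` of total mass zero. Let `u` and `u'` be the numbers of labels in `U` among the
first `r` and the first `r'` edges. By induction on the size of `U`, uniformly in `t ≤ ℓ` (`Bd`):
* the moment `fS` is `O(n^{-⌈u/2⌉-⌈u'/2⌉})`;
* the cluster masses of `fW` are `O(n^{-2-⌊u/2⌋-⌊u'/2⌋})`;
* at a vertex where no edge of `U` ends, `fW` is smaller by a further factor `1/n`, and at a vertex
  where no separated edge of `U` ends it is `O(n^{-2-⌊u/2⌋-⌈u'/2⌉})`.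

For the step (`Bd.step`), the terms with `T` nonempty form a source which only involves smaller sets
(`srcA`). A transition along a prescribed edge has probability of order `1/n²`, which gives the
bounds on the source. For the total mass, a singleton `T = {i}` is special: the equilibrium part
contributes nothing because the increment is centred, so only the fluctuation of `f_t(U \ {i})` at
the start of `e i` matters (`sum_srcT_singleton`), and this is where separation of `e i` from the
ends of the other edges gains decay. The moment is a sum of `ℓ = O(n²)` such contributions, each
smaller than the claim by `1/n²`. The fluctuation, in contrast, does not accumulate: its cluster
masses evolve under the primitive matrix `p` with a forcing of total mass zero, and by Doeblin's
contraction (`exists_mixing_const`) they remain of the order of one step's forcing.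
-/

open MeasureTheory ProbabilityTheory Filter Asymptotics Matrix
open scoped ENNReal NNReal BigOperators Topology

noncomputable section

/-- number of vertices in cluster `k` -/
def clusterCard {K : ℕ} (n : ℕ) (σ : Fin n → Fin K) (k : Fin K) : ℕ :=
  (Finset.univ.filter fun v : Fin n => σ v = k).card

/-- transition matrix of the block Markov chain -/
def bmcTrans {K n : ℕ} (p : Matrix (Fin K) (Fin K) ℝ) (σ : Fin n → Fin K)
    (x y : Fin n) : ℝ :=
  p (σ x) (σ y) / (clusterCard n σ (σ y) : ℝ)

/-- equilibrium distribution of the block Markov chain -/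
def bmcEquilib {K n : ℕ} (pst : Fin K → ℝ) (σ : Fin n → Fin K) (v : Fin n) : ℝ :=
  pst (σ v) / (clusterCard n σ (σ v) : ℝ)

/-- law of a sample path of length `ℓ+1` with one-step transition probabilities `P`
and initial distribution `ι` -/
def pathLaw (n ℓ : ℕ) (P : Fin n → Fin n → ℝ) (ι : Fin n → ℝ) :
    Measure (Fin (ℓ + 1) → Fin n) :=
  ∑ x : Fin (ℓ + 1) → Fin n,
    ENNReal.ofReal (ι (x 0) * ∏ t : Fin ℓ, P (x t.castSucc) (x t.succ)) • Measure.dirac x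

/-- empirical frequency matrix -/
def freqMatrix (n ℓ : ℕ) (ω : Fin (ℓ + 1) → Fin n) : Matrix (Fin n) (Fin n) ℝ :=
  Matrix.of fun i j => ∑ t : Fin ℓ, if ω t.castSucc = i ∧ ω t.succ = j then (1 : ℝ) else 0

/-- entrywise expectation `E[N̂_X]` of the empirical frequency matrix of the chain started in
equilibrium -/
def meanFreq {K : ℕ} (p : Matrix (Fin K) (Fin K) ℝ) (pst : Fin K → ℝ)
    (n ℓ : ℕ) (σ : Fin n → Fin K) : Matrix (Fin n) (Fin n) ℝ :=
  Matrix.of fun i j =>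
    ∫ ω, freqMatrix n ℓ ω i j ∂ pathLaw n ℓ (bmcTrans p σ) (bmcEquilib pst σ)

/-- the centered frequency matrix `M_X = N̂_X − E[N̂_X]` of the equilibrium chain -/
def centeredFreq {K : ℕ} (p : Matrix (Fin K) (Fin K) ℝ) (pst : Fin K → ℝ)
    (n ℓ : ℕ) (σ : Fin n → Fin K) (ω : Fin (ℓ + 1) → Fin n) : Matrix (Fin n) (Fin n) ℝ :=
  freqMatrix n ℓ ω - meanFreq p pst n ℓ σ


set_option linter.unusedSectionVars false

/-! ### Mixing of the cluster chain -/

lemma l1_vecMul_le {K : ℕ} (q : Matrix (Fin K) (Fin K) ℝ) (hq0 : ∀ i j, 0 ≤ q i j)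
    (s : ℝ) (hq1 : ∀ i, ∑ j, q i j = s) (h : Fin K → ℝ) :
    ∑ k, |(h ᵥ* q) k| ≤ s * ∑ k, |h k| := by
  calc ∑ k, |(h ᵥ* q) k| ≤ ∑ k, ∑ i, |h i| * q i k := by
        refine Finset.sum_le_sum fun k _ => ?_
        rw [Matrix.vecMul, dotProduct]
        refine (Finset.abs_sum_le_sum_abs _ _).trans (le_of_eq ?_)
        exact Finset.sum_congr rfl fun i _ => by rw [abs_mul, abs_of_nonneg (hq0 i k)]
    _ = s * ∑ k, |h k| := by
        rw [Finset.sum_comm, Finset.mul_sum]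
        refine Finset.sum_congr rfl fun i _ => ?_
        rw [← Finset.mul_sum, hq1, mul_comm]

lemma pow_row_sum {K : ℕ} (p : Matrix (Fin K) (Fin K) ℝ) (hp1 : ∀ i, ∑ j, p i j = 1) (r : ℕ) :
    ∀ i, ∑ j, (p ^ r) i j = 1 := by
  induction r with
  | zero => intro i; simp [Matrix.one_apply]
  | succ r ih =>
    intro i
    simp only [pow_succ, Matrix.mul_apply]
    rw [Finset.sum_comm]
    simp_rw [← Finset.mul_sum, hp1, mul_one, ih]

/-- Doeblin contraction: if all entries of the stochastic matrix `q` are at least `δ`, then `q`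
contracts the `ℓ¹`-norm of vectors of total mass zero by the factor `1 - Kδ`. -/
lemma l1_contract {K : ℕ} (q : Matrix (Fin K) (Fin K) ℝ) (hq1 : ∀ i, ∑ j, q i j = 1)
    (δ : ℝ) (hδ : ∀ i j, δ ≤ q i j) (h : Fin K → ℝ) (h0 : ∑ k, h k = 0) :
    ∑ k, |(h ᵥ* q) k| ≤ (1 - K * δ) * ∑ k, |h k| := by
  have e : h ᵥ* q = h ᵥ* (Matrix.of fun i j => q i j - δ) := by
    ext k
    simp only [Matrix.vecMul, dotProduct, Matrix.of_apply, mul_sub, Finset.sum_sub_distrib]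
    rw [← Finset.sum_mul, h0]; ring
  rw [e]
  refine l1_vecMul_le _ (fun i j => by simpa using hδ i j) _ (fun i => ?_) h
  simp [Finset.sum_sub_distrib, hq1]

/-- Uniform boundedness of a forced evolution `h (t+1) = h t * p + src t` with centred forcing:
the forcing does not accumulate, because `p` is primitive. -/
lemma exists_mixing_const {K : ℕ} (hK : 1 ≤ K) (p : Matrix (Fin K) (Fin K) ℝ)
    (hp0 : ∀ i j, 0 ≤ p i j) (hp1 : ∀ i, ∑ j, p i j = 1)
    (hprim : ∃ r : ℕ, 0 < r ∧ ∀ i j, 0 < (p ^ r) i j) :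
    ∃ A : ℝ, 0 ≤ A ∧ ∀ (N : ℕ) (h src : ℕ → Fin K → ℝ) (β : ℝ), 0 ≤ β → h 0 = 0 →
      (∀ t, h (t + 1) = h t ᵥ* p + src t) → (∀ t, ∑ k, h t k = 0) →
      (∀ t, t < N → ∑ k, |src t k| ≤ β) → ∀ t, t ≤ N → ∑ k, |h t k| ≤ A * β := by
  obtain ⟨r, hr, hpos⟩ := hprim
  have : NeZero K := ⟨by omega⟩
  obtain ⟨⟨i0, j0⟩, -, hmin⟩ := Finset.exists_min_image (Finset.univ : Finset (Fin K × Fin K))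
    (fun x => (p ^ r) x.1 x.2) ⟨(0, 0), Finset.mem_univ _⟩
  set δ := (p ^ r) i0 j0 with hδ
  have hδ0 : 0 < δ := hpos i0 j0
  have hKδ : 0 < (K : ℝ) * δ := by
    have : (0 : ℝ) < K := by exact_mod_cast hK
    positivity
  have hrow := pow_row_sum p hp1 r
  have hδm : ∀ i j, δ ≤ (p ^ r) i j := fun i j => hmin (i, j) (Finset.mem_univ _)
  have hKδ1 : (K : ℝ) * δ ≤ 1 := by
    have := Finset.sum_le_sum (fun j (_ : j ∈ Finset.univ) => hδm i0 j)
    rw [hrow i0] at this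
    simpa using this
  refine ⟨r / (K * δ), by positivity, ?_⟩
  intro N h src β hβ h00 hrec hz hsrc
  have key : ∀ t j, t + j ≤ N → ∑ k, |(h (t + j) - h t ᵥ* (p ^ j)) k| ≤ j * β := by
    intro t j
    induction j with
    | zero => intro _; simp
    | succ j ih =>
      intro hj
      have h1 := ih (by omega)
      have e : h (t + (j + 1)) - h t ᵥ* (p ^ (j + 1))
          = (h (t + j) - h t ᵥ* (p ^ j)) ᵥ* p + src (t + j) := by
        rw [← add_assoc, hrec, Matrix.sub_vecMul, Matrix.vecMul_vecMul, ← pow_succ]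
        abel
      rw [e]
      have h2 := l1_vecMul_le p hp0 1 hp1 (h (t + j) - h t ᵥ* (p ^ j))
      have h3 := hsrc (t + j) (by omega)
      have h4 : ∑ k, |((h (t + j) - h t ᵥ* (p ^ j)) ᵥ* p + src (t + j)) k|
          ≤ ∑ k, |((h (t + j) - h t ᵥ* (p ^ j)) ᵥ* p) k| + ∑ k, |src (t + j) k| := by
        rw [← Finset.sum_add_distrib]
        exact Finset.sum_le_sum fun k _ => abs_add_le _ _
      push_cast
      linarith
  intro t
  induction t using Nat.strong_induction_on with
  | _ t ih =>
    intro ht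
    by_cases htr : t < r
    · have := key 0 t (by omega)
      rw [h00] at this
      simp only [zero_add, Matrix.zero_vecMul, sub_zero] at this
      refine this.trans ?_
      refine mul_le_mul_of_nonneg_right ?_ hβ
      rw [le_div_iff₀ hKδ]
      have h1 : (t : ℝ) ≤ r := by exact_mod_cast htr.le
      have h2 : (0 : ℝ) ≤ t := by positivity
      nlinarith
    · obtain ⟨s, rfl⟩ : ∃ s, t = s + r := ⟨t - r, by omega⟩
      have h1 := ih s (by omega) (by omega)
      have h2 := key s r ht
      have h3 := l1_contract (p ^ r) hrow δ hδm (h s) (hz s)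
      have h4 : ∑ k, |h (s + r) k| ≤
          ∑ k, |(h (s + r) - h s ᵥ* (p ^ r)) k| + ∑ k, |(h s ᵥ* (p ^ r)) k| := by
        rw [← Finset.sum_add_distrib]
        refine Finset.sum_le_sum fun k _ => ?_
        have := abs_add_le ((h (s + r) - h s ᵥ* (p ^ r)) k) ((h s ᵥ* (p ^ r)) k)
        simpa using this
      have h5 : (1 - K * δ) * ∑ k, |h s k| ≤ (1 - K * δ) * (r / (K * δ) * β) :=
        mul_le_mul_of_nonneg_left h1 (by linarith)
      have h6 : (r : ℝ) * β + (1 - K * δ) * (r / (K * δ) * β) = r / (K * δ) * β := by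
        field_simp
        ring
      linarith

/-! ### The chain as a forward recursion -/

/-- The matrix `P` weighted by the product of the centred edge indicators
`1{(x,y) = e i} - μ i` over `i ∈ T`. -/
def stepW {n : ℕ} {ι : Type*} (P : Fin n → Fin n → ℝ) (e : ι → Fin n × Fin n) (μ : ι → ℝ)
    (T : Finset ι) (x y : Fin n) : ℝ :=
  P x y * ∏ i ∈ T, ((if (x, y) = e i then (1 : ℝ) else 0) - μ i)

/-- `fwd P Π e μ t U y` is `E[∏_{i ∈ U} (N_{e i}(t) - t μ i) ; X_t = y]`, where `N(t)` counts the
transitions up to time `t`, defined through the one-step recursion in `t`. -/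
def fwd {n : ℕ} {ι : Type*} [DecidableEq ι] (P : Fin n → Fin n → ℝ) (Q : Fin n → ℝ)
    (e : ι → Fin n × Fin n) (μ : ι → ℝ) : ℕ → Finset ι → Fin n → ℝ
  | 0, U, y => if U = ∅ then Q y else 0
  | t + 1, U, y => ∑ T ∈ U.powerset, ∑ x, fwd P Q e μ t (U \ T) x * stepW P e μ T x y

lemma integral_pathLaw {n ℓ : ℕ} (P : Fin n → Fin n → ℝ) (Q : Fin n → ℝ)
    (hP : ∀ x y, 0 ≤ P x y) (hQ : ∀ x, 0 ≤ Q x) (f : (Fin (ℓ + 1) → Fin n) → ℝ) :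
    ∫ ω, f ω ∂ pathLaw n ℓ P Q
      = ∑ ω : Fin (ℓ + 1) → Fin n, Q (ω 0) * (∏ t : Fin ℓ, P (ω t.castSucc) (ω t.succ)) * f ω := by
  unfold pathLaw
  rw [integral_finsetSum_measure]
  · refine Finset.sum_congr rfl fun ω _ => ?_
    rw [integral_smul_measure, integral_dirac, ENNReal.toReal_ofReal, smul_eq_mul]
    exact mul_nonneg (hQ _) (Finset.prod_nonneg fun _ _ => hP _ _)
  · intro ω _
    exact (integrable_dirac (by simp)).smul_measure (by simp)

/-- Justifies the probabilistic reading of `fwd`; expanding the product over `U` according to which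
labels take their increment in the last step gives the recursion. -/
lemma fwd_eq_path_sum {n : ℕ} {ι : Type*} [DecidableEq ι] (P : Fin n → Fin n → ℝ)
    (Q : Fin n → ℝ) (e : ι → Fin n × Fin n) (μ : ι → ℝ) (t : ℕ) :
    ∀ (U : Finset ι) (y : Fin n), fwd P Q e μ t U y
      = ∑ ω : Fin (t + 1) → Fin n, if ω (Fin.last t) = y then
          Q (ω 0) * (∏ s : Fin t, P (ω s.castSucc) (ω s.succ)) *
            ∏ i ∈ U, (freqMatrix n t ω (e i).1 (e i).2 - t * μ i) else 0 := by
  induction t with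
  | zero =>
    intro U y
    rw [← (Equiv.funUnique (Fin 1) (Fin n)).symm.sum_comp]
    simp only [fwd, freqMatrix]
    simp [Finset.prod_const, zero_pow_eq]
  | succ t ih =>
    intro U y
    rw [← (Fin.snocEquiv (fun _ : Fin (t + 2) => Fin n)).sum_comp, Fintype.sum_prod_type]
    simp only [Fin.snocEquiv, Equiv.coe_fn_mk, Fin.snoc_last]
    rw [Finset.sum_eq_single y (fun z _ hz => by simp [hz]) (by simp)]
    simp only [if_true, fwd]
    simp_rw [ih]
    have step : ∀ ω : Fin (t + 1) → Fin n,
        Q ((Fin.snoc ω y : Fin (t + 2) → Fin n) 0) *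
          (∏ s : Fin (t + 1), P ((Fin.snoc ω y : Fin (t + 2) → Fin n) s.castSucc)
            ((Fin.snoc ω y : Fin (t + 2) → Fin n) s.succ)) *
            ∏ i ∈ U, (freqMatrix n (t + 1) (Fin.snoc ω y) (e i).1 (e i).2
              - ((t + 1 : ℕ) : ℝ) * μ i)
        = ∑ T ∈ U.powerset, Q (ω 0) * (∏ s : Fin t, P (ω s.castSucc) (ω s.succ)) *
            (∏ i ∈ U \ T, (freqMatrix n t ω (e i).1 (e i).2 - t * μ i)) *
              stepW P e μ T (ω (Fin.last t)) y := by
      intro ω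
      have h0 : (Fin.snoc ω y : Fin (t + 2) → Fin n) 0 = ω 0 := by
        rw [← Fin.castSucc_zero, Fin.snoc_castSucc (α := fun _ => Fin n)]
      have hs : ∀ s : Fin t, (Fin.snoc ω y : Fin (t + 2) → Fin n) s.castSucc.succ = ω s.succ := by
        intro s
        rw [Fin.succ_castSucc, Fin.snoc_castSucc (α := fun _ => Fin n)]
      have hN : ∀ i, freqMatrix n (t + 1) (Fin.snoc ω y) (e i).1 (e i).2
            - ((t + 1 : ℕ) : ℝ) * μ i
          = ((if (ω (Fin.last t), y) = e i then (1 : ℝ) else 0) - μ i)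
            + (freqMatrix n t ω (e i).1 (e i).2 - t * μ i) := by
        intro i
        simp only [freqMatrix, Matrix.of_apply, Fin.sum_univ_castSucc]
        simp only [Fin.snoc_castSucc (α := fun _ => Fin n), hs, Fin.succ_last,
          Fin.snoc_last (α := fun _ => Fin n), Prod.ext_iff]
        push_cast
        ring
      simp_rw [hN, Finset.prod_add, Fin.prod_univ_castSucc, hs, h0, Fin.succ_last,
        Fin.snoc_castSucc (α := fun _ => Fin n), Fin.snoc_last (α := fun _ => Fin n)]
      rw [Finset.mul_sum]
      refine Finset.sum_congr rfl fun T _ => ?_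
      unfold stepW
      ring
    simp_rw [step]
    conv_rhs => rw [Finset.sum_comm]
    refine Finset.sum_congr rfl fun T _ => ?_
    simp_rw [Finset.sum_mul, ite_mul, zero_mul]
    rw [Finset.sum_comm]
    refine Finset.sum_congr rfl fun ω _ => ?_
    rw [Finset.sum_ite_eq]
    simp

lemma integral_eq_sum_fwd {n : ℕ} {ι : Type*} [DecidableEq ι] (P : Fin n → Fin n → ℝ)
    (Q : Fin n → ℝ) (hP : ∀ x y, 0 ≤ P x y) (hQ : ∀ x, 0 ≤ Q x)
    (e : ι → Fin n × Fin n) (μ : ι → ℝ) (t : ℕ) (U : Finset ι) :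
    ∫ ω, ∏ i ∈ U, (freqMatrix n t ω (e i).1 (e i).2 - t * μ i) ∂ pathLaw n t P Q
      = ∑ y, fwd P Q e μ t U y := by
  rw [integral_pathLaw P Q hP hQ]
  simp_rw [fwd_eq_path_sum]
  rw [Finset.sum_comm]
  refine Finset.sum_congr rfl fun ω _ => ?_
  rw [Finset.sum_ite_eq]
  simp

/-! ### Basic estimates for the block Markov chain -/

/-- Quantitative regularity of a block Markov chain on `n` vertices: all clusters have size at
least `n / c`. Here `ξ` stands for `1 / n`. -/
structure BlockData {K n : ℕ} (p : Matrix (Fin K) (Fin K) ℝ) (pst : Fin K → ℝ)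
    (σ : Fin n → Fin K) (c ξ : ℝ) : Prop where
  p_nonneg : ∀ i j, 0 ≤ p i j
  p_row : ∀ i, ∑ j, p i j = 1
  pst_nonneg : ∀ i, 0 ≤ pst i
  pst_sum : ∑ i, pst i = 1
  stat : ∀ j, ∑ i, pst i * p i j = pst j
  card_pos : ∀ k, 0 < (clusterCard n σ k : ℝ)
  card_inv : ∀ k, (clusterCard n σ k : ℝ)⁻¹ ≤ c * ξ
  one_le_c : 1 ≤ c
  xi_pos : 0 < ξ
  xi_le : ξ ≤ 1
  n_xi : (n : ℝ) * ξ = 1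

/-- The mass that `w` puts on each cluster. -/
def cl {K n : ℕ} (σ : Fin n → Fin K) (w : Fin n → ℝ) (k : Fin K) : ℝ :=
  ∑ x, if σ x = k then w x else 0

/-- The equilibrium probability `Π(a) P(a,b)` of traversing the edge `(a,b)`. -/
def edgeMean {K n : ℕ} (p : Matrix (Fin K) (Fin K) ℝ) (pst : Fin K → ℝ) (σ : Fin n → Fin K)
    (ε : Fin n × Fin n) : ℝ :=
  bmcEquilib pst σ ε.1 * bmcTrans p σ ε.1 ε.2

section Block

variable {K n : ℕ} {p : Matrix (Fin K) (Fin K) ℝ} {pst : Fin K → ℝ} {σ : Fin n → Fin K} {c ξ : ℝ}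

lemma sum_cl_mul (w : Fin n → ℝ) (g : Fin K → ℝ) :
    ∑ k, cl σ w k * g k = ∑ x, w x * g (σ x) := by
  simp_rw [cl, Finset.sum_mul, ite_mul, zero_mul]
  rw [Finset.sum_comm]
  simp

lemma sum_cl (w : Fin n → ℝ) : ∑ k, cl σ w k = ∑ x, w x := by
  simpa using sum_cl_mul (σ := σ) w (fun _ => 1)

lemma sum_abs_cl_le (w : Fin n → ℝ) : ∑ k, |cl σ w k| ≤ ∑ x, |w x| := by
  rw [← sum_cl (σ := σ) (fun x => |w x|)]
  refine Finset.sum_le_sum fun k _ => (Finset.abs_sum_le_sum_abs _ _).trans (le_of_eq ?_)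
  exact Finset.sum_congr rfl fun x _ => by split_ifs <;> simp

lemma cl_add_mul (w q : Fin n → ℝ) (s : ℝ) (k : Fin K) :
    cl σ (fun x => w x + s * q x) k = cl σ w k + s * cl σ q k := by
  unfold cl
  rw [Finset.mul_sum, ← Finset.sum_add_distrib]
  exact Finset.sum_congr rfl fun x _ => by split_ifs <;> simp

lemma cl_comp_div (H : BlockData p pst σ c ξ) (g : Fin K → ℝ) :
    cl σ (fun y => g (σ y) / (clusterCard n σ (σ y) : ℝ)) = g := by
  ext k
  have h : ∀ x, (if σ x = k then g (σ x) / (clusterCard n σ (σ x) : ℝ) else 0)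
      = if σ x = k then g k / (clusterCard n σ k : ℝ) else 0 := by
    intro x; split_ifs with h <;> simp [h]
  unfold cl
  simp_rw [h]
  rw [← Finset.sum_filter, Finset.sum_const, nsmul_eq_mul]
  exact mul_div_cancel₀ (g k) (H.card_pos k).ne'

namespace BlockData

lemma p_le (H : BlockData p pst σ c ξ) (i j : Fin K) : p i j ≤ 1 := by
  rw [← H.p_row i]
  exact Finset.single_le_sum (fun j _ => H.p_nonneg i j) (Finset.mem_univ j)

lemma pst_le (H : BlockData p pst σ c ξ) (i : Fin K) : pst i ≤ 1 := by
  rw [← H.pst_sum]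
  exact Finset.single_le_sum (fun j _ => H.pst_nonneg j) (Finset.mem_univ i)

lemma P_nonneg (H : BlockData p pst σ c ξ) (x y : Fin n) : 0 ≤ bmcTrans p σ x y :=
  div_nonneg (H.p_nonneg _ _) (H.card_pos _).le

lemma Q_nonneg (H : BlockData p pst σ c ξ) (x : Fin n) : 0 ≤ bmcEquilib pst σ x :=
  div_nonneg (H.pst_nonneg _) (H.card_pos _).le

lemma P_le (H : BlockData p pst σ c ξ) (x y : Fin n) : bmcTrans p σ x y ≤ c * ξ := by
  unfold bmcTrans
  rw [div_eq_mul_inv]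
  have h1 := H.card_inv (σ y)
  have h2 := H.p_le (σ x) (σ y)
  have h3 := inv_nonneg.2 (H.card_pos (σ y)).le
  nlinarith [H.p_nonneg (σ x) (σ y)]

lemma Q_le (H : BlockData p pst σ c ξ) (x : Fin n) : bmcEquilib pst σ x ≤ c * ξ := by
  unfold bmcEquilib
  rw [div_eq_mul_inv]
  have h1 := H.card_inv (σ x)
  have h2 := H.pst_le (σ x)
  have h3 := inv_nonneg.2 (H.card_pos (σ x)).le
  nlinarith [H.pst_nonneg (σ x)]

lemma cl_Q (H : BlockData p pst σ c ξ) : cl σ (bmcEquilib pst σ) = pst := cl_comp_div H pst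

lemma Q_sum (H : BlockData p pst σ c ξ) : ∑ x, bmcEquilib pst σ x = 1 := by
  rw [← sum_cl (σ := σ), H.cl_Q, H.pst_sum]

lemma P_row (H : BlockData p pst σ c ξ) (x : Fin n) : ∑ y, bmcTrans p σ x y = 1 := by
  have h := sum_cl (σ := σ) (bmcTrans p σ x)
  rw [← h, ← H.p_row (σ x)]
  exact Finset.sum_congr rfl fun k _ => congrFun (cl_comp_div H (p (σ x))) k

lemma vP (w : Fin n → ℝ) (y : Fin n) :
    ∑ x, w x * bmcTrans p σ x y = (cl σ w ᵥ* p) (σ y) / (clusterCard n σ (σ y) : ℝ) := by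
  simp only [Matrix.vecMul, dotProduct, bmcTrans]
  rw [sum_cl_mul w (fun k => p k (σ y)), Finset.sum_div]
  exact Finset.sum_congr rfl fun x _ => by ring

lemma Q_stat (H : BlockData p pst σ c ξ) (y : Fin n) :
    ∑ x, bmcEquilib pst σ x * bmcTrans p σ x y = bmcEquilib pst σ y := by
  rw [vP, H.cl_Q]
  simp only [Matrix.vecMul, dotProduct, H.stat, bmcEquilib]

lemma cl_vP (H : BlockData p pst σ c ξ) (w : Fin n → ℝ) :
    cl σ (fun y => ∑ x, w x * bmcTrans p σ x y) = cl σ w ᵥ* p := by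
  simp_rw [vP]
  exact cl_comp_div H _

lemma sum_vP (H : BlockData p pst σ c ξ) (w : Fin n → ℝ) :
    ∑ y, ∑ x, w x * bmcTrans p σ x y = ∑ x, w x := by
  rw [Finset.sum_comm]
  simp_rw [← Finset.mul_sum, H.P_row, mul_one]

lemma abs_vP_le (H : BlockData p pst σ c ξ) (w : Fin n → ℝ) (y : Fin n) :
    |∑ x, w x * bmcTrans p σ x y| ≤ c * ξ * ∑ k, |cl σ w k| := by
  rw [vP, div_eq_mul_inv, abs_mul, mul_comm, abs_of_pos (inv_pos.2 (H.card_pos _))]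
  refine mul_le_mul (H.card_inv _) ?_ (abs_nonneg _)
    (mul_nonneg (by linarith [H.one_le_c]) H.xi_pos.le)
  simp only [Matrix.vecMul, dotProduct]
  refine (Finset.abs_sum_le_sum_abs _ _).trans (Finset.sum_le_sum fun k _ => ?_)
  rw [abs_mul, abs_of_nonneg (H.p_nonneg _ _)]
  exact mul_le_of_le_one_right (abs_nonneg _) (H.p_le _ _)

lemma mu_nonneg (H : BlockData p pst σ c ξ) (ε : Fin n × Fin n) : 0 ≤ edgeMean p pst σ ε :=
  mul_nonneg (H.Q_nonneg _) (H.P_nonneg _ _)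

lemma mu_le (H : BlockData p pst σ c ξ) (ε : Fin n × Fin n) :
    edgeMean p pst σ ε ≤ c ^ 2 * ξ ^ 2 := by
  have := mul_le_mul (H.Q_le ε.1) (H.P_le ε.1 ε.2) (H.P_nonneg _ _)
    (mul_nonneg (by linarith [H.one_le_c]) H.xi_pos.le)
  refine this.trans (le_of_eq (by ring))

lemma mu_le_one (H : BlockData p pst σ c ξ) (ε : Fin n × Fin n) : edgeMean p pst σ ε ≤ 1 := by
  have h1 : bmcEquilib pst σ ε.1 ≤ 1 := by
    rw [← H.Q_sum]
    exact Finset.single_le_sum (fun x _ => H.Q_nonneg x) (Finset.mem_univ ε.1)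
  have h2 : bmcTrans p σ ε.1 ε.2 ≤ 1 := by
    rw [← H.P_row ε.1]
    exact Finset.single_le_sum (fun x _ => H.P_nonneg _ x) (Finset.mem_univ ε.2)
  exact mul_le_one₀ h1 (H.P_nonneg _ _) h2

lemma pow_le (H : BlockData p pst σ c ξ) {a b : ℕ} (h : a ≤ b) : ξ ^ b ≤ ξ ^ a :=
  pow_le_pow_of_le_one H.xi_pos.le H.xi_le h

end BlockData

/-! ### One-step weights -/

variable {ι : Type*} {e : ι → Fin n × Fin n}

/-- `stepW` with the means of the edges as centring constants. -/
abbrev sW (p : Matrix (Fin K) (Fin K) ℝ) (pst : Fin K → ℝ) (σ : Fin n → Fin K)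
    (e : ι → Fin n × Fin n) (T : Finset ι) (x y : Fin n) : ℝ :=
  stepW (bmcTrans p σ) e (fun i => edgeMean p pst σ (e i)) T x y

/-- The value of the product of centred indicators away from all edges `e i`, `i ∈ T`. -/
def kap (p : Matrix (Fin K) (Fin K) ℝ) (pst : Fin K → ℝ) (σ : Fin n → Fin K)
    (e : ι → Fin n × Fin n) (T : Finset ι) : ℝ :=
  ∏ i ∈ T, (-edgeMean p pst σ (e i))

/-- The part of `sW` concentrated on the edges `e i`, `i ∈ T`. -/
def nW (p : Matrix (Fin K) (Fin K) ℝ) (pst : Fin K → ℝ) (σ : Fin n → Fin K)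
    (e : ι → Fin n × Fin n) (T : Finset ι) (x y : Fin n) : ℝ :=
  sW p pst σ e T x y - kap p pst σ e T * bmcTrans p σ x y

/-- The number of `j ∈ T` whose edge differs from that of `i`. -/
def qN (e : ι → Fin n × Fin n) (T : Finset ι) (i : ι) : ℕ := (T.filter fun j => e j ≠ e i).card

lemma nW_eq_zero {T : Finset ι} {x y : Fin n} (h : ∀ i ∈ T, e i ≠ (x, y)) :
    nW p pst σ e T x y = 0 := by
  unfold nW sW stepW kap
  rw [Finset.prod_congr rfl (g := fun i => -edgeMean p pst σ (e i)), mul_comm, sub_self]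
  intro i hi
  rw [if_neg (Ne.symm (h i hi)), zero_sub]

lemma abs_kap_le [Fintype ι] (H : BlockData p pst σ c ξ) (T : Finset ι) :
    |kap p pst σ e T| ≤ (c ^ 2) ^ Fintype.card ι * ξ ^ (2 * T.card) := by
  unfold kap
  rw [Finset.abs_prod]
  have h1 : ∏ i ∈ T, |-edgeMean p pst σ (e i)| ≤ ∏ _i ∈ T, (c ^ 2 * ξ ^ 2) := by
    refine Finset.prod_le_prod (fun _ _ => abs_nonneg _) fun i _ => ?_
    rw [abs_neg, abs_of_nonneg (H.mu_nonneg _)]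
    exact H.mu_le _
  refine h1.trans ?_
  rw [Finset.prod_const, mul_pow, ← pow_mul ξ]
  refine mul_le_mul_of_nonneg_right ?_ (pow_nonneg H.xi_pos.le _)
  exact pow_le_pow_right₀ (one_le_pow₀ H.one_le_c) (Finset.card_le_univ T)

lemma abs_nW_le [Fintype ι] (H : BlockData p pst σ c ξ) (T : Finset ι) (i : ι) :
    |nW p pst σ e T (e i).1 (e i).2|
      ≤ 2 * (c ^ 2) ^ Fintype.card ι * c * ξ ^ (1 + 2 * qN e T i) := by
  have hc := H.one_le_c
  have hM : (0 : ℝ) ≤ (c ^ 2) ^ Fintype.card ι := by positivity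
  have hq : qN e T i ≤ T.card := Finset.card_filter_le _ _
  have h1 : |∏ j ∈ T, ((if ((e i).1, (e i).2) = e j then (1 : ℝ) else 0) - edgeMean p pst σ (e j))|
      ≤ (c ^ 2) ^ Fintype.card ι * ξ ^ (2 * qN e T i) := by
    rw [Finset.abs_prod]
    have h2 : ∏ j ∈ T, |(if ((e i).1, (e i).2) = e j then (1 : ℝ) else 0) - edgeMean p pst σ (e j)|
        ≤ ∏ j ∈ T, (if e j ≠ e i then c ^ 2 * ξ ^ 2 else 1) := by
      refine Finset.prod_le_prod (fun _ _ => abs_nonneg _) fun j _ => ?_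
      have h3 := H.mu_nonneg (e j)
      have h4 := H.mu_le (e j)
      have h5 := H.mu_le_one (e j)
      by_cases hj : e j = e i
      · simp only [Prod.mk.eta, hj, if_true, ne_eq, not_true_eq_false, if_false]
        rw [hj] at h3 h5
        rw [abs_le]; constructor <;> linarith
      · rw [if_neg (by simpa using Ne.symm hj), if_pos hj, zero_sub, abs_neg, abs_of_nonneg h3]
        exact h4
    refine h2.trans ?_
    rw [Finset.prod_ite, Finset.prod_const, Finset.prod_const_one, mul_one, mul_pow, ← pow_mul ξ]
    refine mul_le_mul_of_nonneg_right ?_ (pow_nonneg H.xi_pos.le _)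
    exact pow_le_pow_right₀ (one_le_pow₀ hc) (Finset.card_le_univ _)
  have h6 : |kap p pst σ e T| ≤ (c ^ 2) ^ Fintype.card ι * ξ ^ (2 * qN e T i) :=
    (abs_kap_le H T).trans (mul_le_mul_of_nonneg_left (H.pow_le (by omega)) hM)
  unfold nW sW stepW
  rw [mul_comm (kap p pst σ e T), ← mul_sub, abs_mul, abs_of_nonneg (H.P_nonneg _ _)]
  have h7 := (abs_sub _ _).trans (add_le_add h1 h6)
  refine (mul_le_mul (H.P_le _ _) h7 (abs_nonneg _)
    (mul_nonneg (by linarith) H.xi_pos.le)).trans (le_of_eq ?_)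
  ring

lemma abs_sum_nW_le (v : Fin n → ℝ) (T : Finset ι) (y : Fin n) :
    |∑ x, v x * nW p pst σ e T x y| ≤ ∑ i ∈ T, if y = (e i).2 then
      |v (e i).1| * |nW p pst σ e T (e i).1 (e i).2| else 0 := by
  refine (Finset.abs_sum_le_sum_abs _ _).trans ?_
  have h : ∀ x, |v x * nW p pst σ e T x y| ≤ ∑ i ∈ T, if e i = (x, y) then
      |v x * nW p pst σ e T x y| else 0 := by
    intro x
    by_cases hx : ∃ i ∈ T, e i = (x, y)
    · obtain ⟨i, hi, he⟩ := hx
      have := Finset.single_le_sum (f := fun i => if e i = (x, y) then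
        |v x * nW p pst σ e T x y| else 0) (fun i _ => by split_ifs <;> positivity) hi
      simpa [he] using this
    · push Not at hx
      rw [nW_eq_zero hx]
      simp
  refine (Finset.sum_le_sum fun x _ => h x).trans ?_
  rw [Finset.sum_comm]
  refine Finset.sum_le_sum fun i _ => le_of_eq ?_
  by_cases hy : y = (e i).2
  · rw [if_pos hy, Finset.sum_eq_single (e i).1]
    · rw [if_pos (by rw [hy]), abs_mul, hy]
    · intro x _ hx
      rw [if_neg]
      intro h; exact hx (by rw [h])
    · simp
  · rw [if_neg hy]
    refine Finset.sum_eq_zero fun x _ => if_neg ?_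
    intro h; exact hy (by rw [h])

end Block

/-! ### Exponents -/

/-- Combinatorial hypotheses on a family of labelled edges. The labels in `sing` carry edges that
occur only once; the edges with label in `sep` are in addition separated from all others. -/
structure EdgeData {ι : Type*} {n : ℕ} (sing sep : ι → Prop) (e : ι → Fin n × Fin n) : Prop where
  sep_sing : ∀ i, sep i → sing i
  ne : ∀ i j, sing i → j ≠ i → e j ≠ e i
  sep_ne : ∀ i j, sep i → j ≠ i → (e i).2 ≠ (e j).1 ∧ (e i).1 ≠ (e j).2

section Exponents

variable {ι : Type*} (sing sep : ι → Prop) [DecidablePred sing] [DecidablePred sep]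

/-- Number of elements of `U` satisfying `q`. -/
def num (q : ι → Prop) [DecidablePred q] (U : Finset ι) : ℕ := (U.filter q).card

/-- Exponent of `1/n` for the moment `E[∏_{i ∈ U} M_i]`. -/
def eE (U : Finset ι) : ℕ := (num sing U + 1) / 2 + (num sep U + 1) / 2

/-- Exponent of `1/n` for the cluster masses of the fluctuation. -/
def fE (U : Finset ι) : ℕ := 2 + num sing U / 2 + num sep U / 2

/-- Exponent of `1/n` for the values of the fluctuation at single vertices. -/
def gE (U : Finset ι) : ℕ := 2 + num sing U / 2 + (num sep U + 1) / 2

variable {sing sep}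

lemma num_sdiff [DecidableEq ι] (q : ι → Prop) [DecidablePred q] {U T : Finset ι} (h : T ⊆ U) :
    num q U = num q (U \ T) + num q T := by
  unfold num
  rw [← Finset.card_union_of_disjoint, ← Finset.filter_union, Finset.sdiff_union_of_subset h]
  exact Finset.disjoint_filter_filter Finset.sdiff_disjoint

lemma num_le_card (q : ι → Prop) [DecidablePred q] (T : Finset ι) : num q T ≤ T.card :=
  Finset.card_filter_le _ _

lemma num_singleton (q : ι → Prop) [DecidablePred q] (i : ι) :
    num q {i} = if q i then 1 else 0 := by
  unfold num
  rw [Finset.filter_singleton]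
  split_ifs <;> simp

variable {n : ℕ} {e : ι → Fin n × Fin n}

lemma num_sep_le (E : EdgeData sing sep e) (T : Finset ι) : num sep T ≤ num sing T :=
  Finset.card_le_card (Finset.monotone_filter_right T fun i _ => E.sep_sing i)

lemma qN_sing [DecidableEq ι] (E : EdgeData sing sep e) {T : Finset ι} {i : ι} (hi : i ∈ T)
    (h : sing i) : qN e T i + 1 = T.card := by
  have : (T.filter fun j => e j ≠ e i) = T.erase i := by
    ext j
    simp only [Finset.mem_filter, Finset.mem_erase]
    constructor
    · rintro ⟨h1, h2⟩
      exact ⟨fun h => h2 (by rw [h]), h1⟩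
    · rintro ⟨h1, h2⟩
      exact ⟨h2, E.ne i j h h1⟩
  unfold qN
  rw [this, Finset.card_erase_add_one hi]

lemma num_le_qN (E : EdgeData sing sep e) (T : Finset ι) {i : ι} (h : ¬ sing i) :
    num sing T ≤ qN e T i := by
  refine Finset.card_le_card fun j hj => ?_
  rw [Finset.mem_filter] at hj ⊢
  exact ⟨hj.1, fun he => E.ne j i hj.2 (fun hij => h (hij ▸ hj.2)) he.symm⟩

lemma num_sep_le_qN (E : EdgeData sing sep e) (T : Finset ι) {i : ι} (h : ¬ sep i) :
    num sep T ≤ qN e T i := by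
  refine Finset.card_le_card fun j hj => ?_
  rw [Finset.mem_filter] at hj ⊢
  exact ⟨hj.1, fun he => E.ne j i (E.sep_sing j hj.2) (fun hij => h (hij ▸ hj.2)) he.symm⟩

lemma num_le_qN_succ [DecidableEq ι] (E : EdgeData sing sep e) {T : Finset ι} {i : ι}
    (hi : i ∈ T) : num sing T ≤ qN e T i + 1 := by
  by_cases h : sing i
  · rw [qN_sing E hi h]; exact num_le_card _ _
  · have := num_le_qN E T h; omega

end Exponents

/-! ### The inductive estimate -/

section Core

variable {K n : ℕ} {ι : Type*} [DecidableEq ι]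

/-- `E[∏_{i ∈ U} M_{e i}(t) ; X_t = y]` for the block Markov chain. -/
def fv (p : Matrix (Fin K) (Fin K) ℝ) (pst : Fin K → ℝ) (σ : Fin n → Fin K)
    (e : ι → Fin n × Fin n) (t : ℕ) (U : Finset ι) (y : Fin n) : ℝ :=
  fwd (bmcTrans p σ) (bmcEquilib pst σ) e (fun i => edgeMean p pst σ (e i)) t U y

/-- The moment `E[∏_{i ∈ U} M_{e i}(t)]`. -/
def fS (p : Matrix (Fin K) (Fin K) ℝ) (pst : Fin K → ℝ) (σ : Fin n → Fin K)
    (e : ι → Fin n × Fin n) (t : ℕ) (U : Finset ι) : ℝ := ∑ y, fv p pst σ e t U y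

/-- The fluctuation of `fv` around the multiple of the equilibrium of the same total mass. -/
def fW (p : Matrix (Fin K) (Fin K) ℝ) (pst : Fin K → ℝ) (σ : Fin n → Fin K)
    (e : ι → Fin n × Fin n) (t : ℕ) (U : Finset ι) (y : Fin n) : ℝ :=
  fv p pst σ e t U y - fS p pst σ e t U * bmcEquilib pst σ y

/-- Contribution to the recursion of the labels in `T` whose increment is taken in the last
step. -/
def srcT (p : Matrix (Fin K) (Fin K) ℝ) (pst : Fin K → ℝ) (σ : Fin n → Fin K)
    (e : ι → Fin n × Fin n) (t : ℕ) (U T : Finset ι) (y : Fin n) : ℝ :=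
  ∑ x, fv p pst σ e t (U \ T) x * sW p pst σ e T x y

/-- Sum of `srcT` over all nonempty `T ⊆ U`. -/
def srcA (p : Matrix (Fin K) (Fin K) ℝ) (pst : Fin K → ℝ) (σ : Fin n → Fin K)
    (e : ι → Fin n × Fin n) (t : ℕ) (U : Finset ι) (y : Fin n) : ℝ :=
  ∑ T ∈ U.powerset.erase ∅, srcT p pst σ e t U T y

/-- The bounds propagated by the induction. The fluctuation is smaller by one more factor `1/n`
at vertices at which no edge of `U` ends. -/
structure Bd (sing sep : ι → Prop) [DecidablePred sing] [DecidablePred sep]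
    (p : Matrix (Fin K) (Fin K) ℝ) (pst : Fin K → ℝ) (σ : Fin n → Fin K)
    (e : ι → Fin n × Fin n) (ξ C : ℝ) (t : ℕ) (U : Finset ι) : Prop where
  s : |fS p pst σ e t U| ≤ C * ξ ^ eE sing sep U
  f : ∑ k, |cl σ (fW p pst σ e t U) k| ≤ C * ξ ^ fE sing sep U
  g1 : ∀ y, (∀ i ∈ U, y ≠ (e i).2) → |fW p pst σ e t U y| ≤ C * ξ ^ (fE sing sep U + 1)
  g2 : ∀ y, (∀ i ∈ U, sep i → y ≠ (e i).2) → |fW p pst σ e t U y| ≤ C * ξ ^ gE sing sep U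

variable {sing sep : ι → Prop} [DecidablePred sing] [DecidablePred sep]
variable {p : Matrix (Fin K) (Fin K) ℝ} {pst : Fin K → ℝ} {σ : Fin n → Fin K} {c ξ : ℝ}
variable {e : ι → Fin n × Fin n} {C : ℝ} {t : ℕ} {U T V : Finset ι}

lemma fv_zero (U : Finset ι) (y : Fin n) :
    fv p pst σ e 0 U y = if U = ∅ then bmcEquilib pst σ y else 0 := rfl

lemma fv_succ (t : ℕ) (U : Finset ι) (y : Fin n) :
    fv p pst σ e (t + 1) U y
      = ∑ x, fv p pst σ e t U x * bmcTrans p σ x y + srcA p pst σ e t U y := by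
  have h : fv p pst σ e (t + 1) U y = ∑ T ∈ U.powerset, srcT p pst σ e t U T y := rfl
  rw [h, ← Finset.add_sum_erase _ _ (Finset.empty_mem_powerset U)]
  simp [srcA, srcT, stepW]

lemma fS_succ (H : BlockData p pst σ c ξ) (t : ℕ) (U : Finset ι) :
    fS p pst σ e (t + 1) U = fS p pst σ e t U + ∑ y, srcA p pst σ e t U y := by
  unfold fS
  simp_rw [fv_succ]
  rw [Finset.sum_add_distrib, H.sum_vP]

lemma fv_eq (t : ℕ) (U : Finset ι) (y : Fin n) :
    fv p pst σ e t U y = fW p pst σ e t U y + fS p pst σ e t U * bmcEquilib pst σ y := by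
  unfold fW; ring

lemma fW_zero (H : BlockData p pst σ c ξ) (U : Finset ι) (y : Fin n) :
    fW p pst σ e 0 U y = 0 := by
  unfold fW fS
  simp_rw [fv_zero]
  split_ifs <;> simp [H.Q_sum]

lemma fW_succ (H : BlockData p pst σ c ξ) (t : ℕ) (U : Finset ι) (y : Fin n) :
    fW p pst σ e (t + 1) U y = ∑ x, fW p pst σ e t U x * bmcTrans p σ x y
      + (srcA p pst σ e t U y - (∑ z, srcA p pst σ e t U z) * bmcEquilib pst σ y) := by
  have h : ∑ x, fv p pst σ e t U x * bmcTrans p σ x y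
      = ∑ x, fW p pst σ e t U x * bmcTrans p σ x y + fS p pst σ e t U * bmcEquilib pst σ y := by
    rw [← H.Q_stat y, Finset.mul_sum, ← Finset.sum_add_distrib]
    exact Finset.sum_congr rfl fun x _ => by rw [fv_eq]; ring
  have h2 : fW p pst σ e (t + 1) U y
      = fv p pst σ e (t + 1) U y - fS p pst σ e (t + 1) U * bmcEquilib pst σ y := rfl
  rw [h2, fv_succ, h, fS_succ H]
  ring

lemma fW_sum (H : BlockData p pst σ c ξ) (t : ℕ) (U : Finset ι) :
    ∑ y, fW p pst σ e t U y = 0 := by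
  unfold fW
  rw [Finset.sum_sub_distrib, ← Finset.mul_sum, H.Q_sum]
  simp [fS]

lemma Bd.cl_fv_le (H : BlockData p pst σ c ξ) (hC : 0 ≤ C)
    (hB : Bd sing sep p pst σ e ξ C t V) :
    ∑ k, |cl σ (fv p pst σ e t V) k| ≤ 2 * C * ξ ^ eE sing sep V := by
  have h : ∀ k, cl σ (fv p pst σ e t V) k
      = cl σ (fW p pst σ e t V) k + fS p pst σ e t V * pst k := by
    intro k
    have h1 := cl_add_mul (σ := σ) (fW p pst σ e t V) (bmcEquilib pst σ) (fS p pst σ e t V) k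
    rw [H.cl_Q] at h1
    rw [← h1]
    exact congrArg (fun w => cl σ w k) (funext fun x => fv_eq t V x)
  have h1 : ∑ k, |cl σ (fv p pst σ e t V) k|
      ≤ ∑ k, |cl σ (fW p pst σ e t V) k| + |fS p pst σ e t V| := by
    calc _ ≤ ∑ k, (|cl σ (fW p pst σ e t V) k| + |fS p pst σ e t V| * pst k) := by
          refine Finset.sum_le_sum fun k _ => ?_
          rw [h]
          refine (abs_add_le _ _).trans ?_
          rw [abs_mul, abs_of_nonneg (H.pst_nonneg k)]
      _ = _ := by rw [Finset.sum_add_distrib, ← Finset.mul_sum, H.pst_sum, mul_one]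
  have h2 := hB.f
  have h3 := hB.s
  have h4 : C * ξ ^ fE sing sep V ≤ C * ξ ^ eE sing sep V :=
    mul_le_mul_of_nonneg_left (H.pow_le (by unfold eE fE; omega)) hC
  linarith

lemma Bd.fv_le (H : BlockData p pst σ c ξ) (hC : 0 ≤ C)
    (hB : Bd sing sep p pst σ e ξ C t V) (a : Fin n) (ha : ∀ i ∈ V, sep i → a ≠ (e i).2) :
    |fv p pst σ e t V a| ≤ (1 + c) * C * ξ ^ (1 + eE sing sep V) := by
  rw [fv_eq]
  have h1 := hB.g2 a ha
  have h4 : C * ξ ^ gE sing sep V ≤ C * ξ ^ (1 + eE sing sep V) :=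
    mul_le_mul_of_nonneg_left (H.pow_le (by unfold eE gE; omega)) hC
  have h5 : |fS p pst σ e t V * bmcEquilib pst σ a| ≤ C * ξ ^ eE sing sep V * (c * ξ) := by
    rw [abs_mul, abs_of_nonneg (H.Q_nonneg a)]
    exact mul_le_mul hB.s (H.Q_le a) (H.Q_nonneg a) (mul_nonneg hC (pow_nonneg H.xi_pos.le _))
  have h6 := abs_add_le (fW p pst σ e t V a) (fS p pst σ e t V * bmcEquilib pst σ a)
  have h7 : (1 + c) * C * ξ ^ (1 + eE sing sep V)
      = C * ξ ^ (1 + eE sing sep V) + C * ξ ^ eE sing sep V * (c * ξ) := by ring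
  linarith

/-- Constant in the bounds for `srcT`. -/
def cB (ι : Type*) [Fintype ι] (c C : ℝ) : ℝ := 2 * (c ^ 2) ^ Fintype.card ι * c * (1 + c) * C

lemma source_ne (E : EdgeData sing sep e) {i : ι} (hi : i ∈ T) :
    ∀ j ∈ U \ T, sep j → (e i).1 ≠ (e j).2 := by
  intro j hj hs
  have hij : i ≠ j := fun h => (Finset.mem_sdiff.1 hj).2 (h ▸ hi)
  exact (E.sep_ne j i hs hij).1.symm

lemma srcT_eq (t : ℕ) (U T : Finset ι) (y : Fin n) :
    srcT p pst σ e t U T y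
      = kap p pst σ e T * ∑ x, fv p pst σ e t (U \ T) x * bmcTrans p σ x y
        + ∑ x, fv p pst σ e t (U \ T) x * nW p pst σ e T x y := by
  unfold srcT nW
  rw [Finset.mul_sum, ← Finset.sum_add_distrib]
  exact Finset.sum_congr rfl fun x _ => by ring

variable [Fintype ι]

lemma abs_sum_fv_nW_le (H : BlockData p pst σ c ξ) (E : EdgeData sing sep e) (hC : 0 ≤ C)
    (hB : Bd sing sep p pst σ e ξ C t (U \ T)) (y : Fin n) :
    |∑ x, fv p pst σ e t (U \ T) x * nW p pst σ e T x y|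
      ≤ ∑ i ∈ T, if y = (e i).2 then
          cB ι c C * ξ ^ (2 + eE sing sep (U \ T) + 2 * qN e T i) else 0 := by
  have hc := H.one_le_c
  refine (abs_sum_nW_le _ T y).trans (Finset.sum_le_sum fun i hi => ?_)
  split_ifs
  · refine (mul_le_mul (hB.fv_le H hC _ (source_ne E hi)) (abs_nW_le H T i) (abs_nonneg _)
      ?_).trans (le_of_eq ?_)
    · have := H.xi_pos
      positivity
    · unfold cB; ring
  · exact le_rfl

lemma abs_srcT_le (H : BlockData p pst σ c ξ) (E : EdgeData sing sep e) (hC : 0 ≤ C)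
    (hT : T ⊆ U) (hT0 : T.Nonempty) (hB : Bd sing sep p pst σ e ξ C t (U \ T)) (y : Fin n) :
    |srcT p pst σ e t U T y| ≤ cB ι c C * ξ ^ (fE sing sep U + 1)
      + ∑ i ∈ T, if y = (e i).2 then
          cB ι c C * ξ ^ (2 + eE sing sep (U \ T) + 2 * qN e T i) else 0 := by
  have hc := H.one_le_c
  have hξ := H.xi_pos
  rw [srcT_eq]
  refine (abs_add_le _ _).trans (add_le_add ?_ (abs_sum_fv_nW_le H E hC hB y))
  rw [abs_mul]
  have h1 := H.abs_vP_le (fv p pst σ e t (U \ T)) y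
  have h2 := hB.cl_fv_le H hC
  have h3 : |∑ x, fv p pst σ e t (U \ T) x * bmcTrans p σ x y|
      ≤ c * ξ * (2 * C * ξ ^ eE sing sep (U \ T)) :=
    h1.trans (mul_le_mul_of_nonneg_left h2 (by positivity))
  refine (mul_le_mul (abs_kap_le H T) h3 (abs_nonneg _) (by positivity)).trans ?_
  have h4 : ξ ^ (2 * T.card + 1 + eE sing sep (U \ T)) ≤ ξ ^ (fE sing sep U + 1) := by
    refine H.pow_le ?_
    have a1 := num_sdiff sing hT
    have a2 := num_sdiff sep hT
    have a3 := num_le_card sing T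
    have a4 := num_le_card sep T
    have a5 := hT0.card_pos
    unfold eE fE
    omega
  calc (c ^ 2) ^ Fintype.card ι * ξ ^ (2 * T.card) * (c * ξ * (2 * C * ξ ^ eE sing sep (U \ T)))
      = (2 * (c ^ 2) ^ Fintype.card ι * c * C * 1) * ξ ^ (2 * T.card + 1 + eE sing sep (U \ T)) := by
        ring
    _ ≤ (2 * (c ^ 2) ^ Fintype.card ι * c * C * (1 + c)) * ξ ^ (fE sing sep U + 1) := by
        gcongr
        linarith
    _ = cB ι c C * ξ ^ (fE sing sep U + 1) := by unfold cB; ring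

lemma cB_nonneg (H : BlockData p pst σ c ξ) (hC : 0 ≤ C) : 0 ≤ cB ι c C := by
  have := H.one_le_c
  unfold cB
  positivity

lemma sum_const_mul_pow_le (H : BlockData p pst σ c ξ) {B : ℝ} (hB : 0 ≤ B) (T : Finset ι) (m : ℕ)
    (a : ι → ℝ) (ha : ∀ i ∈ T, a i ≤ B * ξ ^ m) :
    ∑ i ∈ T, a i ≤ Fintype.card ι * B * ξ ^ m := by
  refine (Finset.sum_le_sum ha).trans ?_
  rw [Finset.sum_const, nsmul_eq_mul, mul_assoc]
  have hξ := H.xi_pos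
  refine mul_le_mul_of_nonneg_right ?_ (by positivity)
  exact_mod_cast Finset.card_le_univ T

lemma srcT_g1 (H : BlockData p pst σ c ξ) (E : EdgeData sing sep e) (hC : 0 ≤ C)
    (hT : T ⊆ U) (hT0 : T.Nonempty) (hB : Bd sing sep p pst σ e ξ C t (U \ T)) (y : Fin n)
    (hy : ∀ i ∈ U, y ≠ (e i).2) :
    |srcT p pst σ e t U T y| ≤ (1 + Fintype.card ι) * cB ι c C * ξ ^ (fE sing sep U + 1) := by
  have h := abs_srcT_le H E hC hT hT0 hB y
  rw [Finset.sum_eq_zero (fun i hi => if_neg (hy i (hT hi))), add_zero] at h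
  refine h.trans ?_
  have h1 : (0 : ℝ) ≤ Fintype.card ι * (cB ι c C * ξ ^ (fE sing sep U + 1)) :=
    mul_nonneg (by positivity) (mul_nonneg (cB_nonneg H hC) (pow_nonneg H.xi_pos.le _))
  linarith

lemma srcT_g2 (H : BlockData p pst σ c ξ) (E : EdgeData sing sep e) (hC : 0 ≤ C)
    (hT : T ⊆ U) (hT0 : T.Nonempty) (hB : Bd sing sep p pst σ e ξ C t (U \ T)) (y : Fin n)
    (hy : ∀ i ∈ U, sep i → y ≠ (e i).2) :
    |srcT p pst σ e t U T y| ≤ (1 + Fintype.card ι) * cB ι c C * ξ ^ gE sing sep U := by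
  have hb := cB_nonneg (ι := ι) H hC
  have h := abs_srcT_le H E hC hT hT0 hB y
  have h1 : ξ ^ (fE sing sep U + 1) ≤ ξ ^ gE sing sep U := H.pow_le (by unfold fE gE; omega)
  have h2 := sum_const_mul_pow_le H hb T (gE sing sep U) (fun i => if y = (e i).2 then
          cB ι c C * ξ ^ (2 + eE sing sep (U \ T) + 2 * qN e T i) else 0) (by
    intro i hi
    have hξ := H.xi_pos
    split_ifs with hyi
    · refine mul_le_mul_of_nonneg_left (H.pow_le ?_) hb
      have hs : ¬ sep i := fun hs => hy i (hT hi) hs hyi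
      have a1 := num_sdiff sing hT
      have a2 := num_sdiff sep hT
      have a3 := num_le_qN_succ E hi
      have a4 := num_sep_le_qN E T hs
      unfold eE gE
      omega
    · positivity)
  have h3 := mul_le_mul_of_nonneg_left h1 hb
  linarith

lemma srcT_f (H : BlockData p pst σ c ξ) (E : EdgeData sing sep e) (hC : 0 ≤ C)
    (hT : T ⊆ U) (hT0 : T.Nonempty) (hB : Bd sing sep p pst σ e ξ C t (U \ T)) :
    ∑ y, |srcT p pst σ e t U T y| ≤ (1 + Fintype.card ι) * cB ι c C * ξ ^ fE sing sep U := by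
  have hb := cB_nonneg (ι := ι) H hC
  have h := Finset.sum_le_sum fun y (_ : y ∈ Finset.univ) => abs_srcT_le H E hC hT hT0 hB y
  rw [Finset.sum_add_distrib, Finset.sum_comm, Finset.sum_const] at h
  have h1 : (Finset.univ : Finset (Fin n)).card • (cB ι c C * ξ ^ (fE sing sep U + 1))
      = cB ι c C * ξ ^ fE sing sep U := by
    rw [Finset.card_univ, Fintype.card_fin, nsmul_eq_mul]
    calc (n : ℝ) * (cB ι c C * ξ ^ (fE sing sep U + 1))
        = (n * ξ) * (cB ι c C * ξ ^ fE sing sep U) := by ring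
      _ = _ := by rw [H.n_xi, one_mul]
  rw [h1] at h
  simp only [Finset.sum_ite_eq', Finset.mem_univ, if_true] at h
  have h2 := sum_const_mul_pow_le H hb T (fE sing sep U) (fun i =>
          cB ι c C * ξ ^ (2 + eE sing sep (U \ T) + 2 * qN e T i)) (by
    intro i hi
    refine mul_le_mul_of_nonneg_left (H.pow_le ?_) hb
    have a1 := num_sdiff sing hT
    have a2 := num_sdiff sep hT
    have a3 := num_le_qN_succ E hi
    have a4 := num_sep_le E T
    unfold eE fE
    omega)
  linarith

/-- If a single label takes its increment, only the fluctuation contributes to the total mass,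
because the centred indicator has mean zero under the equilibrium. -/
lemma sum_srcT_singleton (H : BlockData p pst σ c ξ) (t : ℕ) (U : Finset ι) (i : ι) :
    ∑ y, srcT p pst σ e t U {i} y
      = fW p pst σ e t (U \ {i}) (e i).1 * bmcTrans p σ (e i).1 (e i).2 := by
  have h1 : ∀ x y, fv p pst σ e t (U \ {i}) x * sW p pst σ e {i} x y
      = (if (x, y) = e i then fv p pst σ e t (U \ {i}) x * bmcTrans p σ x y else 0)
        - edgeMean p pst σ (e i) * (fv p pst σ e t (U \ {i}) x * bmcTrans p σ x y) := by
    intro x y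
    simp only [sW, stepW, Finset.prod_singleton]
    split_ifs <;> ring
  unfold srcT
  simp_rw [h1, Finset.sum_sub_distrib, ← Finset.mul_sum]
  rw [H.sum_vP, Finset.sum_comm, ← Fintype.sum_prod_type'
    (f := fun x y => if (x, y) = e i then fv p pst σ e t (U \ {i}) x * bmcTrans p σ x y else 0)]
  simp only [Prod.mk.eta, Finset.sum_ite_eq', Finset.mem_univ, if_true]
  rw [fv_eq, edgeMean]
  unfold fS
  ring

lemma srcT_s (H : BlockData p pst σ c ξ) (E : EdgeData sing sep e) (hC : 0 ≤ C)
    (hT : T ⊆ U) (hT0 : T.Nonempty) (hB : Bd sing sep p pst σ e ξ C t (U \ T)) :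
    |∑ y, srcT p pst σ e t U T y|
      ≤ (1 + Fintype.card ι) * cB ι c C * ξ ^ (2 + eE sing sep U) := by
  have hb := cB_nonneg (ι := ι) H hC
  have hc := H.one_le_c
  have hξ := H.xi_pos
  have hM : (1 : ℝ) ≤ (c ^ 2) ^ Fintype.card ι := one_le_pow₀ (one_le_pow₀ hc)
  have hbC1 : (c ^ 2) ^ Fintype.card ι * C ≤ cB ι c C := by
    have h2 : (1 : ℝ) ≤ 2 * c * (1 + c) := by nlinarith
    calc (c ^ 2) ^ Fintype.card ι * C = (c ^ 2) ^ Fintype.card ι * C * 1 := by ring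
      _ ≤ (c ^ 2) ^ Fintype.card ι * C * (2 * c * (1 + c)) :=
          mul_le_mul_of_nonneg_left h2 (by positivity)
      _ = cB ι c C := by unfold cB; ring
  have hbC2 : C * c ≤ cB ι c C := by
    have h2 : (1 : ℝ) ≤ (c ^ 2) ^ Fintype.card ι * (2 * (1 + c)) := by nlinarith
    calc C * c = C * c * 1 := by ring
      _ ≤ C * c * ((c ^ 2) ^ Fintype.card ι * (2 * (1 + c))) :=
          mul_le_mul_of_nonneg_left h2 (by positivity)
      _ = cB ι c C := by unfold cB; ring
  rcases Nat.lt_or_ge 1 T.card with hcard | hcard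
  · -- At least two labels increment simultaneously, which costs a factor `n⁻²` for each of them
    -- but one.
    have h1 : ∑ y, srcT p pst σ e t U T y = kap p pst σ e T * fS p pst σ e t (U \ T)
        + ∑ y, ∑ x, fv p pst σ e t (U \ T) x * nW p pst σ e T x y := by
      simp_rw [srcT_eq]
      rw [Finset.sum_add_distrib, ← Finset.mul_sum, H.sum_vP]
      rfl
    have h2 : |kap p pst σ e T * fS p pst σ e t (U \ T)|
        ≤ cB ι c C * ξ ^ (2 + eE sing sep U) := by
      rw [abs_mul]
      refine (mul_le_mul (abs_kap_le H T) hB.s (abs_nonneg _) (by positivity)).trans ?_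
      have h4 : ξ ^ (2 * T.card + eE sing sep (U \ T)) ≤ ξ ^ (2 + eE sing sep U) := by
        refine H.pow_le ?_
        have a1 := num_sdiff sing hT
        have a2 := num_sdiff sep hT
        have a3 := num_le_card sing T
        have a4 := num_le_card sep T
        unfold eE
        omega
      calc (c ^ 2) ^ Fintype.card ι * ξ ^ (2 * T.card) * (C * ξ ^ eE sing sep (U \ T))
          = ((c ^ 2) ^ Fintype.card ι * C) * ξ ^ (2 * T.card + eE sing sep (U \ T)) := by ring
        _ ≤ cB ι c C * ξ ^ (2 + eE sing sep U) := by gcongr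
    have h3 : |∑ y, ∑ x, fv p pst σ e t (U \ T) x * nW p pst σ e T x y|
        ≤ Fintype.card ι * cB ι c C * ξ ^ (2 + eE sing sep U) := by
      refine (Finset.abs_sum_le_sum_abs _ _).trans
        ((Finset.sum_le_sum fun y _ => abs_sum_fv_nW_le H E hC hB y).trans ?_)
      rw [Finset.sum_comm]
      simp only [Finset.sum_ite_eq', Finset.mem_univ, if_true]
      refine sum_const_mul_pow_le H hb T _ _ fun i hi => ?_
      refine mul_le_mul_of_nonneg_left (H.pow_le ?_) hb
      have a1 := num_sdiff sing hT
      have a2 := num_sdiff sep hT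
      have a3 := num_le_card sing T
      have a4 := num_sep_le E T
      unfold eE
      by_cases hs : sing i
      · have a5 := qN_sing E hi hs
        omega
      · have a5 := num_le_qN E T hs
        omega
    rw [h1]
    refine (abs_add_le _ _).trans ?_
    linarith
  · obtain ⟨i, rfl⟩ := Finset.card_eq_one.1 (le_antisymm hcard hT0.card_pos)
    have a1 := num_sdiff sing hT
    have a2 := num_sdiff sep hT
    rw [num_singleton] at a1 a2
    have h1 : |fW p pst σ e t (U \ {i}) (e i).1| ≤ C * ξ ^ (1 + eE sing sep U) := by
      by_cases hs : sep i
      · refine (hB.g1 _ ?_).trans (mul_le_mul_of_nonneg_left (H.pow_le ?_) hC)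
        · intro j hj
          have hji : j ≠ i := by simpa using (Finset.mem_sdiff.1 hj).2
          exact (E.sep_ne i j hs hji).2
        · rw [if_pos hs] at a2
          rw [if_pos (E.sep_sing i hs)] at a1
          unfold fE eE
          omega
      · refine (hB.g2 _ (source_ne E (Finset.mem_singleton_self i))).trans
          (mul_le_mul_of_nonneg_left (H.pow_le ?_) hC)
        rw [if_neg hs] at a2
        unfold gE eE
        split_ifs at a1 <;> omega
    rw [sum_srcT_singleton H, abs_mul, abs_of_nonneg (H.P_nonneg _ _)]
    refine (mul_le_mul h1 (H.P_le _ _) (H.P_nonneg _ _) (by positivity)).trans ?_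
    calc C * ξ ^ (1 + eE sing sep U) * (c * ξ) = (C * c) * ξ ^ (2 + eE sing sep U) := by ring
      _ ≤ cB ι c C * ξ ^ (2 + eE sing sep U) := mul_le_mul_of_nonneg_right hbC2 (by positivity)
      _ ≤ (1 + Fintype.card ι) * cB ι c C * ξ ^ (2 + eE sing sep U) := by
        have : (0 : ℝ) ≤ Fintype.card ι * (cB ι c C * ξ ^ (2 + eE sing sep U)) := by positivity
        linarith

/-- Constant in the bounds for `srcA`. -/
def cA (ι : Type*) [Fintype ι] (c C : ℝ) : ℝ :=
  2 ^ Fintype.card ι * ((1 + Fintype.card ι) * cB ι c C)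

lemma cA_nonneg (H : BlockData p pst σ c ξ) (hC : 0 ≤ C) : 0 ≤ cA ι c C := by
  have := cB_nonneg (ι := ι) H hC
  unfold cA
  positivity

lemma sum_powerset_le (U : Finset ι) (a : Finset ι → ℝ) (b : ℝ) (hb : 0 ≤ b)
    (h : ∀ T, T ⊆ U → T.Nonempty → a T ≤ b) :
    ∑ T ∈ U.powerset.erase ∅, a T ≤ 2 ^ Fintype.card ι * b := by
  have h1 : ∀ T ∈ U.powerset.erase ∅, a T ≤ b := by
    intro T hT
    rw [Finset.mem_erase, Finset.mem_powerset] at hT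
    exact h T hT.2 (Finset.nonempty_iff_ne_empty.2 hT.1)
  refine (Finset.sum_le_sum h1).trans ?_
  rw [Finset.sum_const, nsmul_eq_mul]
  refine mul_le_mul_of_nonneg_right ?_ hb
  have h2 : (U.powerset.erase ∅).card ≤ 2 ^ Fintype.card ι := by
    refine (Finset.card_le_card (Finset.erase_subset _ _)).trans ?_
    rw [Finset.card_powerset]
    exact Nat.pow_le_pow_right (by norm_num) (Finset.card_le_univ U)
  exact_mod_cast h2

lemma srcA_g1 (H : BlockData p pst σ c ξ) (E : EdgeData sing sep e) (hC : 0 ≤ C)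
    (hB : ∀ T, T ⊆ U → T.Nonempty → Bd sing sep p pst σ e ξ C t (U \ T))
    (y : Fin n) (hy : ∀ i ∈ U, y ≠ (e i).2) :
    |srcA p pst σ e t U y| ≤ cA ι c C * ξ ^ (fE sing sep U + 1) := by
  have hb := cB_nonneg (ι := ι) H hC
  have hξ := H.xi_pos
  refine (Finset.abs_sum_le_sum_abs _ _).trans ((sum_powerset_le U _ _ ?_
    fun T h1 h2 => srcT_g1 H E hC h1 h2 (hB T h1 h2) y hy).trans (le_of_eq ?_))
  · positivity
  · unfold cA; ring

lemma srcA_g2 (H : BlockData p pst σ c ξ) (E : EdgeData sing sep e) (hC : 0 ≤ C)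
    (hB : ∀ T, T ⊆ U → T.Nonempty → Bd sing sep p pst σ e ξ C t (U \ T))
    (y : Fin n) (hy : ∀ i ∈ U, sep i → y ≠ (e i).2) :
    |srcA p pst σ e t U y| ≤ cA ι c C * ξ ^ gE sing sep U := by
  have hb := cB_nonneg (ι := ι) H hC
  have hξ := H.xi_pos
  refine (Finset.abs_sum_le_sum_abs _ _).trans ((sum_powerset_le U _ _ ?_
    fun T h1 h2 => srcT_g2 H E hC h1 h2 (hB T h1 h2) y hy).trans (le_of_eq ?_))
  · positivity
  · unfold cA; ring

lemma srcA_f (H : BlockData p pst σ c ξ) (E : EdgeData sing sep e) (hC : 0 ≤ C)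
    (hB : ∀ T, T ⊆ U → T.Nonempty → Bd sing sep p pst σ e ξ C t (U \ T)) :
    ∑ y, |srcA p pst σ e t U y| ≤ cA ι c C * ξ ^ fE sing sep U := by
  have hb := cB_nonneg (ι := ι) H hC
  have hξ := H.xi_pos
  refine (Finset.sum_le_sum fun y _ => Finset.abs_sum_le_sum_abs _ _).trans ?_
  rw [Finset.sum_comm]
  refine (sum_powerset_le U _ _ ?_
    fun T h1 h2 => srcT_f H E hC h1 h2 (hB T h1 h2)).trans (le_of_eq ?_)
  · positivity
  · unfold cA; ring

lemma srcA_s (H : BlockData p pst σ c ξ) (E : EdgeData sing sep e) (hC : 0 ≤ C)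
    (hB : ∀ T, T ⊆ U → T.Nonempty → Bd sing sep p pst σ e ξ C t (U \ T)) :
    |∑ y, srcA p pst σ e t U y| ≤ cA ι c C * ξ ^ (2 + eE sing sep U) := by
  have hb := cB_nonneg (ι := ι) H hC
  have hξ := H.xi_pos
  unfold srcA
  rw [Finset.sum_comm]
  refine (Finset.abs_sum_le_sum_abs _ _).trans ((sum_powerset_le U _ _ ?_
    fun T h1 h2 => srcT_s H E hC h1 h2 (hB T h1 h2)).trans (le_of_eq ?_))
  · positivity
  · unfold cA; ring

/-- The mixing property of `p` provided by `exists_mixing_const`: a centred forcing of size `β`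
keeps the evolution below `A * β`. -/
def Mixing (p : Matrix (Fin K) (Fin K) ℝ) (A : ℝ) : Prop :=
  ∀ (N : ℕ) (h src : ℕ → Fin K → ℝ) (β : ℝ), 0 ≤ β → h 0 = 0 →
      (∀ t, h (t + 1) = h t ᵥ* p + src t) → (∀ t, ∑ k, h t k = 0) →
      (∀ t, t < N → ∑ k, |src t k| ≤ β) → ∀ t, t ≤ N → ∑ k, |h t k| ≤ A * β

/-- Constant for the bounds on `U` in terms of the constant `C` for its proper subsets. -/
def cNext (ι : Type*) [Fintype ι] (c A C : ℝ) : ℝ :=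
  1 + c * cA ι c C + 2 * A * cA ι c C + 2 * c * A * cA ι c C + cA ι c C + c * cA ι c C

/-- The inductive step: bounds for all proper subsets of `U` at all times give bounds for `U`.
The moment grows by `n^{-2-e}` per step during `O(n²)` steps, whereas the forcing of the
fluctuation is forgotten at an exponential rate. -/
lemma Bd.step {A : ℝ} {N : ℕ} (hA : 0 ≤ A) (hmix : Mixing p A) (H : BlockData p pst σ c ξ)
    (E : EdgeData sing sep e) (hN : (N : ℝ) * ξ ^ 2 ≤ c) (hC : 0 ≤ C)
    (hB : ∀ t, t ≤ N → ∀ T, T ⊆ U → T.Nonempty → Bd sing sep p pst σ e ξ C t (U \ T)) :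
    ∀ t, t ≤ N → Bd sing sep p pst σ e ξ (cNext ι c A C) t U := by
  have hc := H.one_le_c
  have hξ := H.xi_pos
  have hb := cA_nonneg (ι := ι) H hC
  set B := cA ι c C with hBdef
  have hef : ξ ^ (2 + eE sing sep U) ≤ ξ ^ fE sing sep U := H.pow_le (by unfold eE fE; omega)
  -- the moment
  have hS : ∀ t, t ≤ N → |fS p pst σ e t U|
      ≤ ξ ^ eE sing sep U + t * (B * ξ ^ (2 + eE sing sep U)) := by
    intro t
    induction t with
    | zero =>
      intro _
      unfold fS
      simp_rw [fv_zero]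
      by_cases hU : U = ∅
      · subst hU
        simp [H.Q_sum, eE, num]
      · simp [hU]
        positivity
    | succ t ih =>
      intro ht
      have h1 := ih (by omega)
      have h2 := srcA_s H E hC (hB t (by omega))
      rw [fS_succ H]
      have h3 := abs_add_le (fS p pst σ e t U) (∑ y, srcA p pst σ e t U y)
      push_cast
      linarith
  have hS' : ∀ t, t ≤ N → |fS p pst σ e t U| ≤ (1 + c * B) * ξ ^ eE sing sep U := by
    intro t ht
    refine (hS t ht).trans ?_
    have h1 : (t : ℝ) ≤ N := by exact_mod_cast ht
    calc ξ ^ eE sing sep U + t * (B * ξ ^ (2 + eE sing sep U))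
        ≤ ξ ^ eE sing sep U + N * (B * ξ ^ (2 + eE sing sep U)) := by gcongr
      _ = ξ ^ eE sing sep U + (N * ξ ^ 2) * (B * ξ ^ eE sing sep U) := by ring
      _ ≤ ξ ^ eE sing sep U + c * (B * ξ ^ eE sing sep U) := by gcongr
      _ = _ := by ring
  -- the cluster masses of the fluctuation
  have hF : ∀ t, t ≤ N → ∑ k, |cl σ (fW p pst σ e t U) k|
      ≤ A * (2 * B * ξ ^ fE sing sep U) := by
    refine hmix N (fun t => cl σ (fW p pst σ e t U))
      (fun t k => cl σ (srcA p pst σ e t U) k + -(∑ z, srcA p pst σ e t U z) * pst k)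
      (2 * B * ξ ^ fE sing sep U) (by positivity) ?_ ?_ ?_ ?_
    · ext k
      simp [cl, fW_zero H]
    · intro t
      ext k
      rw [Pi.add_apply, ← H.cl_vP, ← congrFun H.cl_Q k, ← cl_add_mul]
      have h0 := cl_add_mul (σ := σ) (fun y => ∑ x, fW p pst σ e t U x * bmcTrans p σ x y)
        (fun y => srcA p pst σ e t U y + -(∑ z, srcA p pst σ e t U z) * bmcEquilib pst σ y) 1 k
      rw [one_mul] at h0
      rw [← h0]
      refine congrArg (fun w => cl σ w k) (funext fun y => ?_)
      rw [fW_succ H]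
      ring
    · intro t
      rw [sum_cl, fW_sum H]
    · intro t ht
      have h1 := srcA_f H E hC (hB t ht.le)
      have h2 := srcA_s H E hC (hB t ht.le)
      have h3 := sum_abs_cl_le (σ := σ) (srcA p pst σ e t U)
      have h4 : ∑ k, |cl σ (srcA p pst σ e t U) k + -(∑ z, srcA p pst σ e t U z) * pst k|
          ≤ ∑ k, |cl σ (srcA p pst σ e t U) k| + |∑ z, srcA p pst σ e t U z| := by
        calc _ ≤ ∑ k, (|cl σ (srcA p pst σ e t U) k| + |∑ z, srcA p pst σ e t U z| * pst k) := by
              refine Finset.sum_le_sum fun k _ => (abs_add_le _ _).trans ?_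
              rw [abs_mul, abs_of_nonneg (H.pst_nonneg k), abs_neg]
          _ = _ := by rw [Finset.sum_add_distrib, ← Finset.mul_sum, H.pst_sum, mul_one]
      have h5 := mul_le_mul_of_nonneg_left hef hb
      linarith
  -- a pointwise bound on the source at `y` gives one on the fluctuation
  have hG : ∀ (m : ℕ) (y : Fin n), m ≤ fE sing sep U + 1 →
      (∀ t, t ≤ N → |srcA p pst σ e t U y| ≤ B * ξ ^ m) → ∀ t, t ≤ N →
      |fW p pst σ e t U y| ≤ (2 * c * A * B + B + c * B) * ξ ^ m := by
    intro m y hm hsrc t ht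
    rcases t with _ | t
    · rw [fW_zero H, abs_zero]
      positivity
    · rw [fW_succ H]
      have hfm : ξ ^ (fE sing sep U + 1) ≤ ξ ^ m := H.pow_le hm
      have h1 : |∑ x, fW p pst σ e t U x * bmcTrans p σ x y| ≤ 2 * c * A * B * ξ ^ m := by
        refine (H.abs_vP_le _ y).trans ?_
        calc c * ξ * ∑ k, |cl σ (fW p pst σ e t U) k|
            ≤ c * ξ * (A * (2 * B * ξ ^ fE sing sep U)) := by
              gcongr
              exact hF t (by omega)
          _ = 2 * c * A * B * ξ ^ (fE sing sep U + 1) := by ring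
          _ ≤ _ := by gcongr
      have h2 := hsrc t (by omega)
      have h3 : |(∑ z, srcA p pst σ e t U z) * bmcEquilib pst σ y| ≤ c * B * ξ ^ m := by
        rw [abs_mul, abs_of_nonneg (H.Q_nonneg y)]
        calc _ ≤ (B * ξ ^ fE sing sep U) * (c * ξ) := by
              refine mul_le_mul ?_ (H.Q_le y) (H.Q_nonneg y) (by positivity)
              exact (srcA_s H E hC (hB t (by omega))).trans (mul_le_mul_of_nonneg_left hef hb)
          _ = c * B * ξ ^ (fE sing sep U + 1) := by ring
          _ ≤ _ := by gcongr
      refine (abs_add_le _ _).trans ?_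
      have h4 := abs_sub (srcA p pst σ e t U y)
        ((∑ z, srcA p pst σ e t U z) * bmcEquilib pst σ y)
      linarith
  have hcB : 0 ≤ c * B := by positivity
  have hAB : 0 ≤ 2 * A * B := by positivity
  have hcAB : 0 ≤ 2 * c * A * B := by positivity
  intro t ht
  refine ⟨?_, ?_, ?_, ?_⟩
  · refine (hS' t ht).trans (mul_le_mul_of_nonneg_right ?_ (by positivity))
    unfold cNext; linarith
  · refine (hF t ht).trans ?_
    rw [← mul_assoc]
    refine mul_le_mul_of_nonneg_right ?_ (by positivity)
    unfold cNext; linarith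
  · intro y hy
    refine (hG _ y le_rfl (fun s hs => srcA_g1 H E hC (hB s hs) y hy) t ht).trans
      (mul_le_mul_of_nonneg_right ?_ (by positivity))
    unfold cNext; linarith
  · intro y hy
    refine (hG _ y (by unfold gE fE; omega) (fun s hs => srcA_g2 H E hC (hB s hs) y hy) t ht).trans
      (mul_le_mul_of_nonneg_right ?_ (by positivity))
    unfold cNext; linarith

lemma Bd.mono {C' : ℝ} (H : BlockData p pst σ c ξ) (h : C ≤ C')
    (hB : Bd sing sep p pst σ e ξ C t U) : Bd sing sep p pst σ e ξ C' t U := by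
  have hξ := H.xi_pos
  have hm : ∀ m : ℕ, C * ξ ^ m ≤ C' * ξ ^ m := fun m =>
    mul_le_mul_of_nonneg_right h (by positivity)
  exact ⟨hB.s.trans (hm _), hB.f.trans (hm _), fun y hy => (hB.g1 y hy).trans (hm _),
    fun y hy => (hB.g2 y hy).trans (hm _)⟩

end Core

/-- The inductive step iterated over the size of `U`; the constant depends neither on `n` nor on the
edges. -/
lemma exists_bd {K : ℕ} {ι : Type*} [DecidableEq ι] [Fintype ι] (sing sep : ι → Prop)
    [DecidablePred sing] [DecidablePred sep] (p : Matrix (Fin K) (Fin K) ℝ) (pst : Fin K → ℝ)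
    {A : ℝ} (hA : 0 ≤ A) (hmix : Mixing p A) (c : ℝ) (k : ℕ) :
    ∃ C : ℝ, 0 ≤ C ∧ ∀ (n : ℕ) (σ : Fin n → Fin K) (ξ : ℝ) (e : ι → Fin n × Fin n) (N : ℕ),
      BlockData p pst σ c ξ → EdgeData sing sep e → (N : ℝ) * ξ ^ 2 ≤ c →
      ∀ t, t ≤ N → ∀ U : Finset ι, U.card < k → Bd sing sep p pst σ e ξ C t U := by
  induction k with
  | zero => exact ⟨0, le_rfl, fun _ _ _ _ _ _ _ _ _ _ U hU => absurd hU (by omega)⟩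
  | succ k ih =>
    obtain ⟨C, hC, h⟩ := ih
    refine ⟨max C (cNext ι c A C), le_max_of_le_left hC, ?_⟩
    intro n σ ξ e N H E hN t ht U hU
    refine Bd.mono H (le_max_right _ _) (Bd.step hA hmix H E hN hC ?_ t ht)
    intro s hs T hT hT0
    refine h n σ ξ e N H E hN s hs _ ?_
    have h1 := Finset.card_sdiff_add_card_eq_card hT
    have h2 := hT0.card_pos
    omega

/-! ### The mean of the frequency matrix -/

/-- By stationarity, `E[N_{ab}] = ℓ Π(a) P(a,b)`. -/
lemma meanFreq_eq {K n : ℕ} {p : Matrix (Fin K) (Fin K) ℝ} {pst : Fin K → ℝ}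
    {σ : Fin n → Fin K} {c ξ : ℝ} (H : BlockData p pst σ c ξ) (ℓ : ℕ) (a b : Fin n) :
    meanFreq p pst n ℓ σ a b = ℓ * edgeMean p pst σ (a, b) := by
  set e : Unit → Fin n × Fin n := fun _ => (a, b) with he
  have hempty : ∀ t y, fv p pst σ e t ∅ y = bmcEquilib pst σ y := by
    intro t
    induction t with
    | zero => intro y; simp [fv_zero]
    | succ t ih =>
      intro y
      rw [fv_succ]
      simp_rw [ih, H.Q_stat]
      simp [srcA]
  have hsum : ∀ t, fS p pst σ e t {()} = 0 := by
    intro t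
    induction t with
    | zero => simp [fS, fv_zero]
    | succ t ih =>
      rw [fS_succ H, ih, zero_add]
      have h1 : (({()} : Finset Unit).powerset.erase ∅) = {{()}} := by decide
      simp only [srcA, h1, Finset.sum_singleton]
      rw [sum_srcT_singleton H, Finset.sdiff_self, fW, fS]
      simp_rw [hempty]
      rw [H.Q_sum]
      ring
  have h1 := integral_eq_sum_fwd (bmcTrans p σ) (bmcEquilib pst σ) H.P_nonneg H.Q_nonneg e
    (fun i => edgeMean p pst σ (e i)) ℓ {()}
  have h2 := integral_eq_sum_fwd (bmcTrans p σ) (bmcEquilib pst σ) H.P_nonneg H.Q_nonneg e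
    (fun i => edgeMean p pst σ (e i)) ℓ ∅
  have h3 := hsum ℓ
  have h4 : ∑ y, fv p pst σ e ℓ ∅ y = 1 := by simp_rw [hempty]; exact H.Q_sum
  unfold fS fv at h3
  unfold fv at h4
  rw [h3] at h1
  rw [h4] at h2
  rw [integral_pathLaw _ _ H.P_nonneg H.Q_nonneg] at h1 h2
  unfold meanFreq
  rw [Matrix.of_apply, integral_pathLaw _ _ H.P_nonneg H.Q_nonneg]
  simp only [Finset.prod_singleton, Finset.prod_empty, mul_one, he, mul_sub,
    Finset.sum_sub_distrib] at h1 h2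
  rw [← Finset.sum_mul, h2] at h1
  linarith

/-! ### Proof of the estimate -/

/-- Labels in the first `s` blocks, each of which has exactly one label, number `s`. -/
lemma num_sigma_lt {R s : ℕ} (hs : s ≤ R) (m : Fin R → ℕ) (hm : ∀ i : Fin R, (i : ℕ) < s → m i = 1) :
    num (fun i : Σ k : Fin R, Fin (m k) => (i.1 : ℕ) < s) Finset.univ = s := by
  unfold num
  rw [Finset.card_filter, Fintype.sum_sigma]
  have h : ∀ k : Fin R, (∑ _y : Fin (m k), if (k : ℕ) < s then 1 else 0)
      = if (k : ℕ) < s then 1 else 0 := by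
    intro k
    split_ifs with hk
    · simp [hm k hk]
    · simp
  simp_rw [h]
  rw [← Finset.card_filter, Fin.card_filter_val_lt, min_eq_right hs]

/-- **Proposition.** Decay of mixed centered moments over tuples of distinct edges in
`E^R_{n,r'}`; the exponent is `⌈r/2⌉ + ⌈r'/2⌉` (note `⌈r/2⌉ = (r+1)/2` in `ℕ`). -/
theorem centered_moment_decay_separated_edges
    (K : ℕ) (hK : 1 ≤ K)
    (p : Matrix (Fin K) (Fin K) ℝ)
    (hp0 : ∀ i j, 0 ≤ p i j) (hp1 : ∀ i, ∑ j, p i j = 1)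
    -- irreducible and aperiodic (equivalently, primitive)
    (hprim : ∃ r : ℕ, 0 < r ∧ ∀ i j, 0 < (p ^ r) i j)
    (pst : Fin K → ℝ) (hpst0 : ∀ i, 0 ≤ pst i) (hpst1 : ∑ i, pst i = 1)
    (hstat : ∀ j, ∑ i, pst i * p i j = pst j)
    (α : Fin K → ℝ) (hα : ∀ k, 0 < α k) (hα1 : ∑ k, α k = 1)
    (lam : ℝ) (hlam : 0 < lam)
    (σ : (n : ℕ) → Fin n → Fin K)
    (hσne : ∀ n, K ≤ n → ∀ k, ∃ v : Fin n, σ n v = k)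
    (hσcard : ∀ k, (fun n => ((clusterCard n (σ n) k : ℝ) - α k * n))
        =o[atTop] fun n => (n : ℝ))
    (ℓ : ℕ → ℕ) (hℓ1 : ∀ n, 1 ≤ ℓ n)
    (hℓ : (fun n => ((ℓ n : ℝ) - lam * (n : ℝ) ^ 2)) =o[atTop] fun n => (n : ℝ) ^ 2)
    (R r r' : ℕ) (hr'r : r' ≤ r) (hrR : r ≤ R)
    (m : Fin R → ℕ) (hm : ∀ i : Fin R, (i : ℕ) < r → m i = 1) :
    ∃ C : ℝ, 0 < C ∧ ∃ n₀ : ℕ, ∀ n, n₀ ≤ n →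
      ∀ e : Fin R → Fin n × Fin n,
        -- pairwise distinct directed edges
        (∀ k l, k ≠ l → e k ≠ e l) →
        -- for `i < r'`: the endpoints of `e i` are separated from the other edges
        (∀ i : Fin R, (i : ℕ) < r' → ∀ j : Fin R, j ≠ i →
          (e i).2 ≠ (e j).1 ∧ (e i).1 ≠ (e j).2) →
        |∫ ω, ∏ k, (centeredFreq p pst n (ℓ n) (σ n) ω (e k).1 (e k).2) ^ (m k)
            ∂ pathLaw n (ℓ n) (bmcTrans p (σ n)) (bmcEquilib pst (σ n))|
          ≤ C * ((n : ℝ) ^ ((r + 1) / 2 + (r' + 1) / 2 : ℕ))⁻¹ := by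
  obtain ⟨A, hA, hmix⟩ := exists_mixing_const hK p hp0 hp1 hprim
  -- `c` bounds `n / #V_k` for every cluster, and `ℓ / n²`
  set c : ℝ := 1 + ∑ k, 2 / α k + (lam + 1) with hcdef
  have hsum0 : 0 ≤ ∑ k, 2 / α k :=
    Finset.sum_nonneg fun k _ => div_nonneg zero_le_two (hα k).le
  -- the power `M_k ^ m k` is written as a product of `m k` equal factors
  obtain ⟨C, hC, hbd⟩ := exists_bd (ι := Σ k : Fin R, Fin (m k))
    (fun i => (i.1 : ℕ) < r) (fun i => (i.1 : ℕ) < r') p pst hA hmix c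
    (Fintype.card (Σ k : Fin R, Fin (m k)) + 1)
  refine ⟨C + 1, by linarith, ?_⟩
  have ev1 : ∀ᶠ n : ℕ in atTop, ∀ k,
      ‖(clusterCard n (σ n) k : ℝ) - α k * n‖ ≤ α k / 2 * ‖(n : ℝ)‖ :=
    eventually_all.2 fun k => (hσcard k).def (half_pos (hα k))
  have ev2 : ∀ᶠ n : ℕ in atTop, ‖(ℓ n : ℝ) - lam * (n : ℝ) ^ 2‖ ≤ 1 * ‖(n : ℝ) ^ 2‖ :=
    hℓ.def one_pos
  obtain ⟨n₀, hn₀⟩ := eventually_atTop.1 ((ev1.and ev2).and (eventually_ge_atTop 1))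
  refine ⟨n₀, fun n hn e hdist hsep => ?_⟩
  obtain ⟨⟨h1, h2⟩, hn1⟩ := hn₀ n hn
  have hnpos : (0 : ℝ) < n := by exact_mod_cast hn1
  have hcard : ∀ k, α k / 2 * n ≤ (clusterCard n (σ n) k : ℝ) := by
    intro k
    have := (abs_le.1 (by simpa using h1 k : |(clusterCard n (σ n) k : ℝ) - α k * n|
      ≤ α k / 2 * n)).1
    linarith
  have hcpos : ∀ k, (0 : ℝ) < α k / 2 * n := fun k => mul_pos (half_pos (hα k)) hnpos
  have H : BlockData p pst (σ n) c (n : ℝ)⁻¹ :=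
    { p_nonneg := hp0
      p_row := hp1
      pst_nonneg := hpst0
      pst_sum := hpst1
      stat := hstat
      card_pos := fun k => (hcpos k).trans_le (hcard k)
      card_inv := by
        intro k
        refine (inv_anti₀ (hcpos k) (hcard k)).trans ?_
        rw [mul_inv, inv_div]
        refine mul_le_mul_of_nonneg_right ?_ (inv_nonneg.2 hnpos.le)
        have := Finset.single_le_sum (f := fun k => 2 / α k)
          (fun k _ => div_nonneg zero_le_two (hα k).le) (Finset.mem_univ k)
        rw [hcdef]
        linarith
      one_le_c := by rw [hcdef]; linarith
      xi_pos := inv_pos.2 hnpos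
      xi_le := inv_le_one_of_one_le₀ (by exact_mod_cast hn1)
      n_xi := mul_inv_cancel₀ hnpos.ne' }
  have E : EdgeData (fun i : Σ k : Fin R, Fin (m k) => (i.1 : ℕ) < r)
      (fun i => (i.1 : ℕ) < r') (fun i => e i.1) := by
    have hne : ∀ i j : Σ k : Fin R, Fin (m k), (i.1 : ℕ) < r → j ≠ i → j.1 ≠ i.1 := by
      rintro ⟨k, a⟩ ⟨l, b⟩ hk hji hlk
      dsimp only at hk hlk
      subst hlk
      have := hm _ hk
      refine hji (Sigma.ext rfl (heq_of_eq (Fin.ext ?_)))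
      have ha : (a : ℕ) < 1 := a.2.trans_eq this
      have hb : (b : ℕ) < 1 := b.2.trans_eq this
      change (b : ℕ) = a
      omega
    exact ⟨fun i hi => lt_of_lt_of_le hi hr'r, fun i j hi hji => hdist _ _ (hne i j hi hji),
      fun i j hi hji => hsep i.1 hi j.1 (hne i j (lt_of_lt_of_le hi hr'r) hji)⟩
  have hN : (ℓ n : ℝ) * ((n : ℝ)⁻¹) ^ 2 ≤ c := by
    have h3 : (ℓ n : ℝ) ≤ (lam + 1) * (n : ℝ) ^ 2 := by
      have := (abs_le.1 (by simpa using h2 : |(ℓ n : ℝ) - lam * (n : ℝ) ^ 2| ≤ (n : ℝ) ^ 2)).2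
      linarith
    calc (ℓ n : ℝ) * ((n : ℝ)⁻¹) ^ 2 ≤ (lam + 1) * (n : ℝ) ^ 2 * ((n : ℝ)⁻¹) ^ 2 := by gcongr
      _ = lam + 1 := by field_simp
      _ ≤ c := by rw [hcdef]; linarith
  have hfin := (hbd n (σ n) _ (fun i => e i.1) (ℓ n) H E hN (ℓ n) le_rfl Finset.univ
    (by rw [Finset.card_univ]; omega)).s
  have hmoment : ∫ ω, ∏ k, (centeredFreq p pst n (ℓ n) (σ n) ω (e k).1 (e k).2) ^ (m k)
        ∂ pathLaw n (ℓ n) (bmcTrans p (σ n)) (bmcEquilib pst (σ n))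
      = fS p pst (σ n) (fun i : Σ k : Fin R, Fin (m k) => e i.1) (ℓ n) Finset.univ := by
    unfold fS fv
    rw [← integral_eq_sum_fwd _ _ H.P_nonneg H.Q_nonneg]
    refine integral_congr_ae (Eventually.of_forall fun ω => ?_)
    dsimp only
    rw [Fintype.prod_sigma]
    refine Finset.prod_congr rfl fun k _ => ?_
    simp only [Finset.prod_const, Finset.card_univ, Fintype.card_fin]
    unfold centeredFreq
    rw [Matrix.sub_apply, meanFreq_eq H]
  rw [hmoment]
  refine hfin.trans ?_
  unfold eE
  rw [num_sigma_lt hrR m hm, num_sigma_lt (hr'r.trans hrR) m (fun i hi => hm i (hi.trans_le hr'r)),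
    inv_pow]
  exact mul_le_mul_of_nonneg_right (by linarith) (by positivity)

end
end

section
/- In the block Markov chain model, there exist constants c₁, c₂ > 0, depending only on K, p, λ and α₁,…,α_K but not on n, on the index i, or on the initial distribution, such that for every n ≥ K, every initial distribution ι, every sample path X with initial distribution ι, every i ∈ {1,…,n}, and every t ≥ 0: P(|D̂_{X,ii} − (ℓ+1)Π_X(i)| > √n·t) ≤ c₁·exp(−c₂·t). -/
/-!
The row sum `D̂_{X,ii}` is the number of visits of the chain to `i` before time `ℓ`, so the claim is
a concentration inequality for an additive functional of a Markov chain, with fluctuations of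
order `√n`: there are about `n ^ 2` steps, each visiting `i` with probability of order `1 / n`.

Let `m = #V_{σ(i)}`. Since one step of the chain only depends on clusters, the Poisson equation
`g - P g = 1_i - Π_X(i)` is solved by `g = 1_i + u ∘ σ / m`, where `u` solves
`u - p u = p(·, σ(i)) - π(σ(i))` on the `K` clusters (`exists_poisson`, through the maximum
principle `harmonic_const`). As `g` is bounded and `P (g ^ 2) = O(1 / m)`, the expansion
`e ^ x ≤ 1 + x + x ^ 2` for `|x| ≤ 1` gives
`P (e ^ {θ g}) ≤ e ^ {θ P g + O(θ ^ 2 / m)}`, i.e. `e ^ {θ g}` is almost superharmonic for the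
kernel tilted by `e ^ {θ (1_i - Π_X(i))}`. Iterating this `ℓ` times along the path
(`path_sum_le`, `exp_moment_le`, `visits_exp_moment`) bounds the exponential moment of
`θ (D̂_{X,ii} - ℓ Π_X(i))` by `exp (2 + O(ℓ θ ^ 2 / m))`. With `θ = ± c / √n` the exponent is
`O(ℓ / (n m)) = O(1)` (`exists_ratio_bound`), and Markov's inequality finishes the proof.
-/

open MeasureTheory ProbabilityTheory Filter Asymptotics Matrix
open scoped ENNReal NNReal BigOperators Topology

noncomputable section

/-- row sums of the empirical frequency matrix, i.e. the diagonal of `D̂` -/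
def rowSums (n ℓ : ℕ) (ω : Fin (ℓ + 1) → Fin n) (i : Fin n) : ℝ :=
  ∑ j, freqMatrix n ℓ ω i j

/-! ### The Poisson equation on the clusters -/

lemma pow_mulVec_fixed {K : ℕ} (p : Matrix (Fin K) (Fin K) ℝ) (u : Fin K → ℝ)
    (hu : p *ᵥ u = u) (r : ℕ) : (p ^ r) *ᵥ u = u := by
  induction r with
  | zero => simp
  | succ r ih => rw [pow_succ, ← Matrix.mulVec_mulVec, hu, ih]

/-- Maximum principle: harmonic functions of a primitive stochastic matrix are constant. -/
lemma harmonic_const {K : ℕ} (p : Matrix (Fin K) (Fin K) ℝ)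
    (hp1 : ∀ i, ∑ j, p i j = 1)
    (hprim : ∃ r : ℕ, 0 < r ∧ ∀ i j, 0 < (p ^ r) i j)
    (u : Fin K → ℝ) (hu : p *ᵥ u = u) (a b : Fin K) : u a = u b := by
  obtain ⟨r, -, hr⟩ := hprim
  have h1 : (p ^ r) *ᵥ (fun _ => (1 : ℝ)) = fun _ => 1 := by
    apply pow_mulVec_fixed
    funext i
    simpa [Matrix.mulVec, dotProduct] using hp1 i
  have h2 := pow_mulVec_fixed p u hu r
  obtain ⟨m, -, hm⟩ := Finset.exists_max_image Finset.univ u ⟨a, Finset.mem_univ a⟩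
  have key : ∀ c, u c = u m := by
    have hsum : ∑ c, (p ^ r) m c * (u m - u c) = 0 := by
      have e1 := congrFun h1 m
      have e2 := congrFun h2 m
      simp only [Matrix.mulVec, dotProduct, mul_one] at e1 e2
      simp only [mul_sub, Finset.sum_sub_distrib, ← Finset.sum_mul, e1, e2]
      ring
    have hz := (Finset.sum_eq_zero_iff_of_nonneg (fun c _ =>
      mul_nonneg (hr m c).le (sub_nonneg.2 (hm c (Finset.mem_univ c))))).1 hsum
    intro c
    have := hz c (Finset.mem_univ c)
    rcases mul_eq_zero.1 this with h | h
    · exact absurd h (hr m c).ne'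
    · linarith
  rw [key a, key b]

/-- Solvability of the Poisson equation on clusters. The matrix `1 - p + 𝟙πᵀ` is invertible, and
its inverse produces solutions for every right-hand side of mean zero under `π`. -/
lemma exists_poisson {K : ℕ} (p : Matrix (Fin K) (Fin K) ℝ)
    (hp1 : ∀ i, ∑ j, p i j = 1)
    (hprim : ∃ r : ℕ, 0 < r ∧ ∀ i j, 0 < (p ^ r) i j)
    (pst : Fin K → ℝ) (hpst1 : ∑ i, pst i = 1)
    (hstat : ∀ j, ∑ i, pst i * p i j = pst j) (k0 : Fin K) :
    ∃ u : Fin K → ℝ, ∀ a, u a - ∑ b, p a b * u b = p a k0 - pst k0 := by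
  let M : Matrix (Fin K) (Fin K) ℝ := 1 - p + Matrix.of (fun _ j => pst j)
  have hM : ∀ u a, (M *ᵥ u) a = u a - ∑ b, p a b * u b + ∑ b, pst b * u b := by
    intro u a
    simp only [M, Matrix.add_mulVec, Matrix.sub_mulVec, Matrix.one_mulVec]
    simp [Matrix.mulVec, dotProduct]
  -- Pairing with `π` annihilates the `1 - p` part.
  have hpi : ∀ u, ∑ a, pst a * (M *ᵥ u) a = ∑ b, pst b * u b := by
    intro u
    have e : ∑ a, pst a * ∑ b, p a b * u b = ∑ b, pst b * u b := by
      simp only [Finset.mul_sum]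
      rw [Finset.sum_comm]
      refine Finset.sum_congr rfl fun b _ => ?_
      rw [← hstat b, Finset.sum_mul]
      exact Finset.sum_congr rfl fun a _ => by ring
    simp only [hM, mul_add, mul_sub, Finset.sum_add_distrib, Finset.sum_sub_distrib,
      ← Finset.sum_mul, hpst1, e]
    ring
  have hinj : Function.Injective M.mulVecLin := by
    rw [injective_iff_map_eq_zero]
    intro u hu
    have hu' : M *ᵥ u = 0 := hu
    have h0 : ∑ b, pst b * u b = 0 := by
      rw [← hpi u, hu']; simp
    have hfix : p *ᵥ u = u := by
      funext a
      have := hM u a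
      rw [hu', h0] at this
      simp only [Pi.zero_apply, add_zero] at this
      simp only [Matrix.mulVec, dotProduct]
      linarith
    funext a
    have hc := fun b => harmonic_const p hp1 hprim u hfix b a
    simp only [hc, ← Finset.sum_mul, hpst1, one_mul] at h0
    exact h0
  obtain ⟨u, hu⟩ := LinearMap.injective_iff_surjective.1 hinj (fun a => p a k0 - pst k0)
  have hu' : M *ᵥ u = fun a => p a k0 - pst k0 := hu
  refine ⟨u, fun a => ?_⟩
  have h0 : ∑ b, pst b * u b = 0 := by
    rw [← hpi u, hu']
    simp only [mul_sub, Finset.sum_sub_distrib, ← Finset.sum_mul, hpst1, hstat]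
    ring
  have := hM u a
  rw [hu', h0] at this
  linarith

/-! ### Transfer operators along paths -/

/-- If `G ≥ 0` satisfies `Q G ≤ ρ G` for a nonnegative kernel `Q`, then the path sum of
`ι(x₀) ∏ Q(x_t, x_{t+1}) G(x_ℓ)` is at most `ρ ^ ℓ ∑ ι G`. -/
lemma path_sum_le {n : ℕ} (Q : Fin n → Fin n → ℝ) (G ι : Fin n → ℝ) (ρ : ℝ)
    (hρ : 0 ≤ ρ) (hQ : ∀ a b, 0 ≤ Q a b) (hι : ∀ a, 0 ≤ ι a)
    (hQG : ∀ a, ∑ b, Q a b * G b ≤ ρ * G a) (ℓ : ℕ) :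
    ∑ x : Fin (ℓ + 1) → Fin n,
        ι (x 0) * (∏ t : Fin ℓ, Q (x t.castSucc) (x t.succ)) * G (x (Fin.last ℓ))
      ≤ ρ ^ ℓ * ∑ a, ι a * G a := by
  induction ℓ with
  | zero =>
    rw [← (Equiv.funUnique (Fin 1) (Fin n)).symm.sum_comp]
    simp
  | succ ℓ ih =>
    rw [← (Fin.snocEquiv (fun _ : Fin (ℓ + 2) => Fin n)).sum_comp, Fintype.sum_prod_type,
      Finset.sum_comm]
    calc _ ≤ ∑ y : Fin (ℓ + 1) → Fin n, ρ * (ι (y 0) *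
            (∏ t : Fin ℓ, Q (y t.castSucc) (y t.succ)) * G (y (Fin.last ℓ))) := by
          refine Finset.sum_le_sum fun y _ => ?_
          have e : ∀ b : Fin n,
              ι ((Fin.snocEquiv (fun _ : Fin (ℓ + 2) => Fin n)) (b, y) 0) *
                (∏ t : Fin (ℓ + 1), Q ((Fin.snocEquiv (fun _ : Fin (ℓ + 2) => Fin n)) (b, y)
                    t.castSucc)
                  ((Fin.snocEquiv (fun _ : Fin (ℓ + 2) => Fin n)) (b, y) t.succ)) *
                G ((Fin.snocEquiv (fun _ : Fin (ℓ + 2) => Fin n)) (b, y) (Fin.last (ℓ + 1)))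
              = (ι (y 0) * ∏ t : Fin ℓ, Q (y t.castSucc) (y t.succ)) *
                (Q (y (Fin.last ℓ)) b * G b) := by
            intro b
            have h0 : (Fin.snoc y b : Fin (ℓ + 2) → Fin n) 0 = y 0 := by
              rw [← Fin.castSucc_zero, Fin.snoc_castSucc (α := fun _ => Fin n)]
            have hs : ∀ t : Fin ℓ,
                (Fin.snoc y b : Fin (ℓ + 2) → Fin n) t.castSucc.succ = y t.succ := by
              intro t
              rw [Fin.succ_castSucc, Fin.snoc_castSucc (α := fun _ => Fin n)]
            have hc : ∀ t : Fin (ℓ + 1),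
                (Fin.snoc y b : Fin (ℓ + 2) → Fin n) t.castSucc = y t := by
              intro t
              rw [Fin.snoc_castSucc (α := fun _ => Fin n)]
            have hl : (Fin.snoc y b : Fin (ℓ + 2) → Fin n) (Fin.last (ℓ + 1)) = b := by
              rw [Fin.snoc_last (α := fun _ => Fin n)]
            simp only [Fin.snocEquiv_apply]
            rw [Fin.prod_univ_castSucc]
            simp only [hc, hs, Fin.succ_last, hl, h0]
            ring
          rw [Finset.sum_congr rfl fun b _ => e b, ← Finset.mul_sum]
          have hn : 0 ≤ ι (y 0) * ∏ t : Fin ℓ, Q (y t.castSucc) (y t.succ) :=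
            mul_nonneg (hι _) (Finset.prod_nonneg fun _ _ => hQ _ _)
          calc _ ≤ (ι (y 0) * ∏ t : Fin ℓ, Q (y t.castSucc) (y t.succ)) *
                (ρ * G (y (Fin.last ℓ))) := mul_le_mul_of_nonneg_left (hQG _) hn
            _ = _ := by ring
      _ = ρ * ∑ y : Fin (ℓ + 1) → Fin n, (ι (y 0) *
            (∏ t : Fin ℓ, Q (y t.castSucc) (y t.succ)) * G (y (Fin.last ℓ))) := by
          rw [Finset.mul_sum]
      _ ≤ ρ * (ρ ^ ℓ * ∑ a, ι a * G a) := mul_le_mul_of_nonneg_left ih hρ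
      _ = _ := by ring

/-- Exponential moment bound for an additive functional `∑ f(X_t)` where `f = g - P g` with
`|θ g| ≤ 1` and `P (g ^ 2) ≤ v`. -/
lemma exp_moment_le {n : ℕ} (P : Fin n → Fin n → ℝ) (hP0 : ∀ a b, 0 ≤ P a b)
    (hP1 : ∀ a, ∑ b, P a b = 1) (ι : Fin n → ℝ) (hι : ∀ a, 0 ≤ ι a) (hι1 : ∑ a, ι a = 1)
    (f g : Fin n → ℝ) (hfg : ∀ a, g a - ∑ b, P a b * g b = f a)
    (θ v : ℝ) (hθ : ∀ a, |θ * g a| ≤ 1) (hv : ∀ a, ∑ b, P a b * g b ^ 2 ≤ v) (ℓ : ℕ) :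
    ∑ x : Fin (ℓ + 1) → Fin n,
        ι (x 0) * (∏ t : Fin ℓ, P (x t.castSucc) (x t.succ)) *
          Real.exp (θ * ∑ t : Fin ℓ, f (x t.castSucc))
      ≤ Real.exp (2 + ℓ * (θ ^ 2 * v)) := by
  have hstep : ∀ a, ∑ b, (Real.exp (θ * f a) * P a b) * Real.exp (θ * g b)
      ≤ Real.exp (θ ^ 2 * v) * Real.exp (θ * g a) := by
    intro a
    have hexp : ∀ b, Real.exp (θ * g b) ≤ 1 + θ * g b + θ ^ 2 * g b ^ 2 := by
      intro b
      have := (abs_le.1 (Real.abs_exp_sub_one_sub_id_le (hθ b))).2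
      nlinarith
    have h1 : ∑ b, P a b * Real.exp (θ * g b)
        ≤ 1 + θ * ∑ b, P a b * g b + θ ^ 2 * v := by
      calc _ ≤ ∑ b, P a b * (1 + θ * g b + θ ^ 2 * g b ^ 2) :=
            Finset.sum_le_sum fun b _ => mul_le_mul_of_nonneg_left (hexp b) (hP0 a b)
        _ = ∑ b, P a b + θ * ∑ b, P a b * g b + θ ^ 2 * ∑ b, P a b * g b ^ 2 := by
            simp only [Finset.mul_sum, ← Finset.sum_add_distrib]
            exact Finset.sum_congr rfl fun b _ => by ring
        _ ≤ _ := by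
            rw [hP1]
            have := mul_le_mul_of_nonneg_left (hv a) (sq_nonneg θ)
            linarith
    have h2 : ∑ b, P a b * Real.exp (θ * g b)
        ≤ Real.exp (θ * ∑ b, P a b * g b + θ ^ 2 * v) :=
      h1.trans (by
        have := Real.add_one_le_exp (θ * ∑ b, P a b * g b + θ ^ 2 * v)
        linarith)
    calc _ = Real.exp (θ * f a) * ∑ b, P a b * Real.exp (θ * g b) := by
          rw [Finset.mul_sum]; exact Finset.sum_congr rfl fun b _ => by ring
      _ ≤ Real.exp (θ * f a) * Real.exp (θ * ∑ b, P a b * g b + θ ^ 2 * v) :=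
          mul_le_mul_of_nonneg_left h2 (Real.exp_pos _).le
      _ = _ := by
          rw [← Real.exp_add, ← Real.exp_add, ← hfg a]
          congr 1; ring
  have hmain := path_sum_le (fun a b => Real.exp (θ * f a) * P a b)
    (fun a => Real.exp (θ * g a)) ι (Real.exp (θ ^ 2 * v)) (Real.exp_pos _).le
    (fun a b => mul_nonneg (Real.exp_pos _).le (hP0 a b)) hι hstep ℓ
  have hι2 : ∑ a, ι a * Real.exp (θ * g a) ≤ Real.exp 1 := by
    calc _ ≤ ∑ a, ι a * Real.exp 1 := Finset.sum_le_sum fun a _ =>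
          mul_le_mul_of_nonneg_left (Real.exp_le_exp.2 (abs_le.1 (hθ a)).2) (hι a)
      _ = _ := by rw [← Finset.sum_mul, hι1, one_mul]
  calc _ ≤ ∑ x : Fin (ℓ + 1) → Fin n, Real.exp 1 * (ι (x 0) *
          (∏ t : Fin ℓ, Real.exp (θ * f (x t.castSucc)) * P (x t.castSucc) (x t.succ)) *
          Real.exp (θ * g (x (Fin.last ℓ)))) := by
        refine Finset.sum_le_sum fun x _ => ?_
        rw [Finset.prod_mul_distrib, ← Real.exp_sum, ← Finset.mul_sum]
        have hw : 0 ≤ ι (x 0) * (∏ t : Fin ℓ, P (x t.castSucc) (x t.succ)) *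
            Real.exp (θ * ∑ t : Fin ℓ, f (x t.castSucc)) :=
          mul_nonneg (mul_nonneg (hι _) (Finset.prod_nonneg fun _ _ => hP0 _ _))
            (Real.exp_pos _).le
        have h1 : 1 ≤ Real.exp 1 * Real.exp (θ * g (x (Fin.last ℓ))) := by
          rw [← Real.exp_add]
          exact Real.one_le_exp (by linarith [(abs_le.1 (hθ (x (Fin.last ℓ)))).1])
        calc _ ≤ _ := le_mul_of_one_le_right hw h1
          _ = _ := by ring
    _ ≤ Real.exp 1 * (Real.exp (θ ^ 2 * v) ^ ℓ * Real.exp 1) := by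
        rw [← Finset.mul_sum]
        exact mul_le_mul_of_nonneg_left (hmain.trans
          (mul_le_mul_of_nonneg_left hι2 (pow_nonneg (Real.exp_pos _).le _)))
          (Real.exp_pos _).le
    _ = _ := by
        rw [← Real.exp_nat_mul, ← Real.exp_add, ← Real.exp_add]
        congr 1; ring

/-! ### The block Markov chain -/

lemma rowSums_eq (n ℓ : ℕ) (ω : Fin (ℓ + 1) → Fin n) (i : Fin n) :
    rowSums n ℓ ω i = ∑ t : Fin ℓ, if ω t.castSucc = i then (1 : ℝ) else 0 := by
  simp only [rowSums, freqMatrix, Matrix.of_apply]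
  rw [Finset.sum_comm]
  refine Finset.sum_congr rfl fun t _ => ?_
  by_cases h : ω t.castSucc = i <;> simp [h]

/-- One-step averages of cluster functions reduce to averages under `p`. -/
lemma bmcTrans_sum {K n : ℕ} (p : Matrix (Fin K) (Fin K) ℝ) (σ : Fin n → Fin K)
    (hσ : ∀ k, ∃ v, σ v = k) (F : Fin K → ℝ) (x : Fin n) :
    ∑ y, bmcTrans p σ x y * F (σ y) = ∑ k, p (σ x) k * F k := by
  rw [← Finset.sum_fiberwise (s := Finset.univ) (g := σ)]
  refine Finset.sum_congr rfl fun k _ => ?_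
  have hcard : (clusterCard n σ k : ℝ) ≠ 0 := by
    obtain ⟨v, hv⟩ := hσ k
    exact_mod_cast (Finset.card_pos.2 ⟨v, by simpa using hv⟩).ne'
  rw [Finset.sum_congr rfl (g := fun _ => p (σ x) k / (clusterCard n σ k : ℝ) * F k)]
  · rw [Finset.sum_const, nsmul_eq_mul]
    change (clusterCard n σ k : ℝ) * _ = _
    field_simp
  · intro y hy
    rw [Finset.mem_filter] at hy
    simp only [bmcTrans, hy.2]

/-- Markov's inequality for the path measure, in finite-sum form. -/
lemma pathLaw_le (n ℓ : ℕ) (P : Fin n → Fin n → ℝ) (hP0 : ∀ a b, 0 ≤ P a b)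
    (ι : Fin n → ℝ) (hι : ∀ a, 0 ≤ ι a) (A : Set (Fin (ℓ + 1) → Fin n))
    (F : (Fin (ℓ + 1) → Fin n) → ℝ) (hF0 : ∀ x, 0 ≤ F x) (hF : ∀ x ∈ A, 1 ≤ F x) :
    pathLaw n ℓ P ι A ≤ ENNReal.ofReal
      (∑ x : Fin (ℓ + 1) → Fin n,
        ι (x 0) * (∏ t : Fin ℓ, P (x t.castSucc) (x t.succ)) * F x) := by
  have hw : ∀ x : Fin (ℓ + 1) → Fin n,
      0 ≤ ι (x 0) * (∏ t : Fin ℓ, P (x t.castSucc) (x t.succ)) := fun x =>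
    mul_nonneg (hι _) (Finset.prod_nonneg fun _ _ => hP0 _ _)
  rw [ENNReal.ofReal_sum_of_nonneg fun x _ => mul_nonneg (hw x) (hF0 x), pathLaw,
    Measure.finsetSum_apply]
  refine Finset.sum_le_sum fun x _ => ?_
  rw [ENNReal.ofReal_mul (hw x), Measure.smul_apply, smul_eq_mul]
  gcongr
  rw [Measure.dirac_apply' _ (Set.toFinite A).measurableSet]
  by_cases hx : x ∈ A
  · simpa [hx] using hF x hx
  · simp [hx]

/-- The ratio `ℓ / (n · #V_k)` converges, hence is bounded uniformly in `n` and `k`. -/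
lemma exists_ratio_bound {K : ℕ} (α : Fin K → ℝ) (hα : ∀ k, 0 < α k) (lam : ℝ)
    (σ : (n : ℕ) → Fin n → Fin K)
    (hσcard : ∀ k, (fun n => ((clusterCard n (σ n) k : ℝ) - α k * n))
        =o[atTop] fun n => (n : ℝ))
    (ℓ : ℕ → ℕ)
    (hℓ : (fun n => ((ℓ n : ℝ) - lam * (n : ℝ) ^ 2)) =o[atTop] fun n => (n : ℝ) ^ 2) :
    ∃ D : ℝ, 0 ≤ D ∧ ∀ n k, (ℓ n : ℝ) / (n * clusterCard n (σ n) k) ≤ D := by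
  have hk : ∀ k, ∃ D : ℝ, ∀ n, (ℓ n : ℝ) / (n * clusterCard n (σ n) k) ≤ D := by
    intro k
    have hne : ∀ᶠ n : ℕ in atTop, (n : ℝ) ≠ 0 := by
      filter_upwards [eventually_gt_atTop 0] with n hn
      exact_mod_cast hn.ne'
    have h1 : Tendsto (fun n => (clusterCard n (σ n) k : ℝ) / n) atTop (𝓝 (α k)) := by
      have h := (hσcard k).tendsto_div_nhds_zero.add_const (α k)
      rw [zero_add] at h
      refine h.congr' ?_
      filter_upwards [hne] with n hn
      field_simp
      ring
    have h2 : Tendsto (fun n => (ℓ n : ℝ) / (n : ℝ) ^ 2) atTop (𝓝 lam) := by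
      have h := hℓ.tendsto_div_nhds_zero.add_const lam
      rw [zero_add] at h
      refine h.congr' ?_
      filter_upwards [hne] with n hn
      field_simp
      ring
    have h3 : Tendsto (fun n => (ℓ n : ℝ) / (n * clusterCard n (σ n) k)) atTop
        (𝓝 (lam / α k)) := by
      refine (h2.div h1 (hα k).ne').congr' ?_
      filter_upwards [hne] with n hn
      simp only [Pi.div_apply]
      rw [div_div, show (n : ℝ) ^ 2 * ((clusterCard n (σ n) k : ℝ) / n)
        = n * clusterCard n (σ n) k by field_simp]
    obtain ⟨D, hD⟩ := h3.isBoundedUnder_le.bddAbove_range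
    exact ⟨D, fun n => hD ⟨n, rfl⟩⟩
  choose D hD using hk
  refine ⟨∑ k, |D k|, Finset.sum_nonneg fun _ _ => abs_nonneg _, fun n k => ?_⟩
  exact (hD k n).trans ((le_abs_self _).trans
    (Finset.single_le_sum (f := fun k => |D k|) (fun _ _ => abs_nonneg _) (Finset.mem_univ k)))

/-- Exponential moments of the centred number of visits to `i`, given a solution `u` of the
Poisson equation on clusters with `|u| ≤ B`. The Poisson equation on vertices is solved by
`1_i + u ∘ σ / #V_{σ(i)}`, whose one-step second moment is of order `1 / #V_{σ(i)}`. -/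
lemma visits_exp_moment {K n : ℕ} (p : Matrix (Fin K) (Fin K) ℝ)
    (hp0 : ∀ i j, 0 ≤ p i j) (hp1 : ∀ i, ∑ j, p i j = 1) (pst : Fin K → ℝ)
    (σ : Fin n → Fin K) (hσ : ∀ k, ∃ v, σ v = k)
    (ι : Fin n → ℝ) (hι : ∀ a, 0 ≤ ι a) (hι1 : ∑ a, ι a = 1) (i : Fin n)
    (u : Fin K → ℝ) (B : ℝ) (hB : ∀ a, |u a| ≤ B)
    (hu : ∀ a, u a - ∑ b, p a b * u b = p a (σ i) - pst (σ i))
    (θ : ℝ) (hθ : |θ| * (1 + B) ≤ 1) (ℓ : ℕ) :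
    ∑ x : Fin (ℓ + 1) → Fin n,
        ι (x 0) * (∏ t : Fin ℓ, bmcTrans p σ (x t.castSucc) (x t.succ)) *
          Real.exp (θ * (rowSums n ℓ x i - ℓ * bmcEquilib pst σ i))
      ≤ Real.exp (2 + ℓ * (θ ^ 2 * ((2 + 2 * B ^ 2) / clusterCard n σ (σ i)))) := by
  set m : ℝ := (clusterCard n σ (σ i) : ℝ) with hm
  have hm1 : 1 ≤ m := by
    rw [hm]
    exact_mod_cast Finset.card_pos.2 ⟨i, by simp⟩
  have hm0 : 0 < m := by linarith
  have hB0 : 0 ≤ B := (abs_nonneg _).trans (hB (σ i))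
  have hP0 : ∀ a b, 0 ≤ bmcTrans p σ a b := fun a b => div_nonneg (hp0 _ _) (Nat.cast_nonneg _)
  have hP1 : ∀ a, ∑ b, bmcTrans p σ a b = 1 := by
    intro a
    have := bmcTrans_sum p σ hσ (fun _ => 1) a
    simpa [hp1] using this
  have hPi : ∀ a, ∑ b, bmcTrans p σ a b * (if b = i then (1 : ℝ) else 0) = p (σ a) (σ i) / m := by
    intro a
    simp [bmcTrans, hm]
  let g : Fin n → ℝ := fun x => (if x = i then 1 else 0) + u (σ x) / m
  have hum : ∀ a, |u a / m| ≤ B / m := by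
    intro a
    rw [abs_div, abs_of_pos hm0]
    gcongr
    exact hB a
  have hBm : B / m ≤ B := div_le_self hB0 hm1
  have hfg : ∀ a, g a - ∑ b, bmcTrans p σ a b * g b
      = (if a = i then 1 else 0) - bmcEquilib pst σ i := by
    intro a
    have h1 := bmcTrans_sum p σ hσ (fun k => u k / m) a
    have h2 : ∑ k, p (σ a) k * (u k / m) = (∑ k, p (σ a) k * u k) / m := by
      rw [Finset.sum_div]; exact Finset.sum_congr rfl fun _ _ => by ring
    simp only [g, mul_add, Finset.sum_add_distrib, hPi, h1, h2, bmcEquilib, ← hm]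
    have h3 := hu (σ a)
    have h4 : u (σ a) / m - (∑ k, p (σ a) k * u k) / m = p (σ a) (σ i) / m - pst (σ i) / m := by
      rw [← sub_div, ← sub_div, h3]
    linarith
  have hg : ∀ a, |θ * g a| ≤ 1 := by
    intro a
    rw [abs_mul]
    refine (mul_le_mul_of_nonneg_left ?_ (abs_nonneg θ)).trans hθ
    refine (abs_add_le _ _).trans (add_le_add ?_ ((hum _).trans hBm))
    split_ifs <;> simp
  have hv : ∀ a, ∑ b, bmcTrans p σ a b * g b ^ 2 ≤ (2 + 2 * B ^ 2) / m := by
    intro a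
    have hsq : ∀ b, g b ^ 2 ≤ 2 * (if b = i then (1 : ℝ) else 0) + 2 * (B ^ 2 / m) := by
      intro b
      have h1 : (u (σ b) / m) ^ 2 ≤ B ^ 2 / m := by
        calc (u (σ b) / m) ^ 2 ≤ (B / m) ^ 2 := sq_le_sq' (abs_le.1 (hum _)).1 (abs_le.1 (hum _)).2
          _ = B / m * (B / m) := sq _
          _ ≤ B * (B / m) := mul_le_mul_of_nonneg_right hBm (by positivity)
          _ = _ := by ring
      have h2 : g b ^ 2 ≤ 2 * (if b = i then (1 : ℝ) else 0) ^ 2 + 2 * (u (σ b) / m) ^ 2 := by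
        simp only [g]
        nlinarith [sq_nonneg ((if b = i then (1 : ℝ) else 0) - u (σ b) / m)]
      have h3 : (if b = i then (1 : ℝ) else 0) ^ 2 = if b = i then (1 : ℝ) else 0 := by
        split_ifs <;> simp
      rw [h3] at h2
      linarith
    have hple : p (σ a) (σ i) ≤ 1 := by
      rw [← hp1 (σ a)]
      exact Finset.single_le_sum (f := fun j => p (σ a) j) (fun j _ => hp0 _ j)
        (Finset.mem_univ (σ i))
    calc _ ≤ ∑ b, bmcTrans p σ a b * (2 * (if b = i then (1 : ℝ) else 0) + 2 * (B ^ 2 / m)) :=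
          Finset.sum_le_sum fun b _ => mul_le_mul_of_nonneg_left (hsq b) (hP0 a b)
      _ = 2 * ∑ b, bmcTrans p σ a b * (if b = i then (1 : ℝ) else 0)
            + 2 * (B ^ 2 / m) * ∑ b, bmcTrans p σ a b := by
          simp only [Finset.mul_sum, ← Finset.sum_add_distrib]
          exact Finset.sum_congr rfl fun b _ => by ring
      _ = (2 * p (σ a) (σ i) + 2 * B ^ 2) / m := by
          rw [hPi, hP1]; ring
      _ ≤ _ := by
          gcongr
          linarith
  have := exp_moment_le (bmcTrans p σ) hP0 hP1 ι hι hι1 _ g hfg θ _ hg hv ℓ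
  convert this using 6 with x
  rw [rowSums_eq, Finset.sum_sub_distrib]
  simp

/-- **Lemma (concentration of the row sums).** There are constants `c₁, c₂ > 0`, not depending
on `n`, `i`, or the initial distribution, such that
`P(|D̂_{X,ii} − (ℓ+1)Π_X(i)| > √n·t) ≤ c₁·exp(−c₂·t)`. -/
theorem row_sum_concentration
    (K : ℕ) (hK : 1 ≤ K)
    (p : Matrix (Fin K) (Fin K) ℝ)
    (hp0 : ∀ i j, 0 ≤ p i j) (hp1 : ∀ i, ∑ j, p i j = 1)
    -- irreducible and aperiodic (equivalently, primitive)
    (hprim : ∃ r : ℕ, 0 < r ∧ ∀ i j, 0 < (p ^ r) i j)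
    (pst : Fin K → ℝ) (hpst0 : ∀ i, 0 ≤ pst i) (hpst1 : ∑ i, pst i = 1)
    (hstat : ∀ j, ∑ i, pst i * p i j = pst j)
    (α : Fin K → ℝ) (hα : ∀ k, 0 < α k) (hα1 : ∑ k, α k = 1)
    (lam : ℝ) (hlam : 0 < lam)
    (σ : (n : ℕ) → Fin n → Fin K)
    (hσne : ∀ n, K ≤ n → ∀ k, ∃ v : Fin n, σ n v = k)
    (hσcard : ∀ k, (fun n => ((clusterCard n (σ n) k : ℝ) - α k * n))
        =o[atTop] fun n => (n : ℝ))
    (ℓ : ℕ → ℕ) (hℓ1 : ∀ n, 1 ≤ ℓ n)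
    (hℓ : (fun n => ((ℓ n : ℝ) - lam * (n : ℝ) ^ 2)) =o[atTop] fun n => (n : ℝ) ^ 2)
    :
    ∃ c₁ c₂ : ℝ, 0 < c₁ ∧ 0 < c₂ ∧
      ∀ n, K ≤ n → ∀ ι : Fin n → ℝ, (∀ v, 0 ≤ ι v) → (∑ v, ι v = 1) →
        ∀ i : Fin n, ∀ t : ℝ, 0 ≤ t →
          pathLaw n (ℓ n) (bmcTrans p (σ n)) ι
              {ω | Real.sqrt (n : ℝ) * t
                < |rowSums n (ℓ n) ω i - ((ℓ n : ℝ) + 1) * bmcEquilib pst (σ n) i|}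
            ≤ ENNReal.ofReal (c₁ * Real.exp (-(c₂ * t))) := by
  choose u hu using exists_poisson p hp1 hprim pst hpst1 hstat
  -- A common bound for the finitely many solutions of the Poisson equation.
  obtain ⟨B, hB⟩ : ∃ B : ℝ, ∀ k a, |u k a| ≤ B := by
    refine ⟨∑ k, ∑ a, |u k a|, fun k a => ?_⟩
    exact (Finset.single_le_sum (f := fun a => |u k a|) (fun _ _ => abs_nonneg _)
      (Finset.mem_univ a)).trans
      (Finset.single_le_sum (f := fun k => ∑ a, |u k a|)
        (fun _ _ => Finset.sum_nonneg fun _ _ => abs_nonneg _) (Finset.mem_univ k))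
  have hB0 : 0 ≤ B := (abs_nonneg _).trans (hB ⟨0, hK⟩ ⟨0, hK⟩)
  obtain ⟨D, hD0, hD⟩ := exists_ratio_bound α hα lam σ hσcard ℓ hℓ
  set c : ℝ := 1 / (1 + B) with hc
  have hc0 : 0 < c := by positivity
  have hc1 : c ≤ 1 := by
    rw [hc, div_le_one (by positivity)]; linarith
  set E : ℝ := Real.exp (2 + (2 + 2 * B ^ 2) * D) with hE
  refine ⟨2 * Real.exp 1 * E, c, by positivity, hc0, ?_⟩
  intro n hn ι hι hι1 i t ht
  have hn1 : (1 : ℝ) ≤ n := by exact_mod_cast hK.trans hn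
  have hsq1 : 1 ≤ Real.sqrt n := Real.one_le_sqrt.2 hn1
  have hsq0 : 0 < Real.sqrt n := by linarith
  set s : ℝ := c / Real.sqrt n with hs
  have hs0 : 0 < s := by positivity
  have hsc : s ≤ c := div_le_self hc0.le hsq1
  have hs1 : s ≤ 1 := hsc.trans hc1
  set m : ℝ := (clusterCard n (σ n) (σ n i) : ℝ) with hm
  have hm1 : 1 ≤ m := by
    rw [hm]
    exact_mod_cast Finset.card_pos.2 ⟨i, by simp⟩
  have hm0 : 0 < m := by linarith
  have hP0 : ∀ a b, 0 ≤ bmcTrans p (σ n) a b := fun a b =>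
    div_nonneg (hp0 _ _) (Nat.cast_nonneg _)
  have hmom : ∀ θ : ℝ, |θ| = s →
      ∑ x : Fin (ℓ n + 1) → Fin n,
        ι (x 0) * (∏ t : Fin (ℓ n), bmcTrans p (σ n) (x t.castSucc) (x t.succ)) *
          Real.exp (θ * (rowSums n (ℓ n) x i - ℓ n * bmcEquilib pst (σ n) i)) ≤ E := by
    intro θ hθ
    refine (visits_exp_moment p hp0 hp1 pst (σ n) (hσne n hn) ι hι hι1 i (u (σ n i)) B
      (hB _) (hu _) θ ?_ (ℓ n)).trans ?_
    · rw [hθ]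
      calc s * (1 + B) ≤ c * (1 + B) := mul_le_mul_of_nonneg_right hsc (by positivity)
        _ = 1 := by rw [hc]; field_simp
    · rw [hE, Real.exp_le_exp]
      have hθ2 : θ ^ 2 ≤ 1 / n := by
        rw [← sq_abs, hθ, hs, div_pow, Real.sq_sqrt (by positivity)]
        gcongr
        exact pow_le_one₀ hc0.le hc1
      have h1 : (ℓ n : ℝ) * (θ ^ 2 * ((2 + 2 * B ^ 2) / m)) ≤
          (ℓ n : ℝ) * (1 / n * ((2 + 2 * B ^ 2) / m)) := by
        gcongr
      have h2 : (ℓ n : ℝ) * (1 / n * ((2 + 2 * B ^ 2) / m)) =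
          (2 + 2 * B ^ 2) * (ℓ n / (n * m)) := by
        field_simp
      have h3 : (2 + 2 * B ^ 2) * (ℓ n / (n * m)) ≤ (2 + 2 * B ^ 2) * D :=
        mul_le_mul_of_nonneg_left (hD n (σ n i)) (by positivity)
      linarith
  have hpst_le : pst (σ n i) ≤ 1 := by
    rw [← hpst1]
    exact Finset.single_le_sum (f := pst) (fun j _ => hpst0 j) (Finset.mem_univ (σ n i))
  have hPi0 : 0 ≤ bmcEquilib pst (σ n) i := div_nonneg (hpst0 _) (Nat.cast_nonneg _)
  have hPi1 : bmcEquilib pst (σ n) i ≤ 1 := by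
    change pst (σ n i) / m ≤ 1
    rw [div_le_one hm0]; linarith
  -- The factor `e ^ 1` absorbs the difference between `ℓ Π_X(i)` and `(ℓ + 1) Π_X(i)`.
  refine (pathLaw_le n (ℓ n) _ hP0 ι hι _ (fun x => Real.exp (1 - c * t) *
      (Real.exp (s * (rowSums n (ℓ n) x i - ℓ n * bmcEquilib pst (σ n) i)) +
        Real.exp (-s * (rowSums n (ℓ n) x i - ℓ n * bmcEquilib pst (σ n) i))))
      (fun x => by positivity) ?_).trans ?_
  · intro x hx
    simp only [Set.mem_ofPred_eq] at hx
    set T : ℝ := rowSums n (ℓ n) x i - ℓ n * bmcEquilib pst (σ n) i with hT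
    have h1 : Real.sqrt n * t < |T| + 1 := by
      refine hx.trans_le ?_
      have : rowSums n (ℓ n) x i - ((ℓ n : ℝ) + 1) * bmcEquilib pst (σ n) i
          = T - bmcEquilib pst (σ n) i := by rw [hT]; ring
      rw [this]
      refine (abs_sub _ _).trans ?_
      rw [abs_of_nonneg hPi0]
      linarith
    have h2 : c * t ≤ s * |T| + 1 := by
      have h3 : s * (Real.sqrt n * t) = c * t := by rw [hs]; field_simp
      have h4 := mul_le_mul_of_nonneg_left h1.le hs0.le
      rw [h3] at h4
      linarith
    have h5 : Real.exp (s * |T|) ≤ Real.exp (s * T) + Real.exp (-s * T) := by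
      rcases abs_cases T with ⟨h, -⟩ | ⟨h, -⟩
      · rw [h]; linarith [Real.exp_pos (-s * T)]
      · rw [h, mul_neg, ← neg_mul]; linarith [Real.exp_pos (s * T)]
    calc 1 ≤ Real.exp (1 - c * t) * Real.exp (s * |T|) := by
          rw [← Real.exp_add]
          exact Real.one_le_exp (by linarith)
      _ ≤ _ := mul_le_mul_of_nonneg_left h5 (Real.exp_pos _).le
  · apply ENNReal.ofReal_le_ofReal
    have hp := hmom s (abs_of_pos hs0)
    have hneg := hmom (-s) (by rw [abs_neg, abs_of_pos hs0])
    calc _ = Real.exp (1 - c * t) *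
          ((∑ x : Fin (ℓ n + 1) → Fin n,
            ι (x 0) * (∏ t : Fin (ℓ n), bmcTrans p (σ n) (x t.castSucc) (x t.succ)) *
              Real.exp (s * (rowSums n (ℓ n) x i - ℓ n * bmcEquilib pst (σ n) i))) +
          ∑ x : Fin (ℓ n + 1) → Fin n,
            ι (x 0) * (∏ t : Fin (ℓ n), bmcTrans p (σ n) (x t.castSucc) (x t.succ)) *
              Real.exp (-s * (rowSums n (ℓ n) x i - ℓ n * bmcEquilib pst (σ n) i))) := by
          rw [← Finset.sum_add_distrib, Finset.mul_sum]
          exact Finset.sum_congr rfl fun x _ => by ring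
      _ ≤ Real.exp (1 - c * t) * (E + E) :=
          mul_le_mul_of_nonneg_left (add_le_add hp hneg) (Real.exp_pos _).le
      _ = _ := by
          rw [sub_eq_add_neg, Real.exp_add]; ring

end
end
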